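/- arXiv:2309.11229 — 3 statements merged into one kernel-verified Lean document; each statement's English description precedes it below -/
import Mathlib

section
/- Let n be an even positive integer and let f : F → 𝔽₂ be defined by f(x) = tr(x^7). If 3 does not divide n, then nl₂(f) ≥ 2^{n−1} − (1/2)·√((13/3)·2^{3n/2 − 1} + 2^n − (1/3)·2^{n/2 + 3}); if 3 divides n, then nl₂(f) ≥ 2^{n−1} − (1/2)·√((13/3)·2^{3n/2 − 1} + 2^{n+2} − (1/3)·2^{n/2 + 3}). -/
noncomputable section

/-- `Fq n` is the finite field with `2 ^ n` elements. -/
abbrev Fq (n : ℕ) : Type := GaloisField 2 n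

/-- The absolute trace map `tr x = x + x^2 + x^4 + ⋯ + x^(2^(n-1))` from `Fq n` to `𝔽₂`. -/
def tr {n : ℕ} (x : Fq n) : ZMod 2 := Algebra.trace (ZMod 2) (Fq n) x

/-- The derivative of `f` with respect to `a`. -/
def der {n : ℕ} (f : Fq n → ZMod 2) (a : Fq n) : Fq n → ZMod 2 :=
  fun x => f x + f (x + a)

/-- Iterated derivatives along a list of directions (head applied last/outermost). -/
def derIter {n : ℕ} (f : Fq n → ZMod 2) : List (Fq n) → (Fq n → ZMod 2)
  | [] => f
  | a :: as => der (derIter f as) a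

/-- `g` has algebraic degree at most `r`: all `(r+1)`-th order derivatives vanish. -/
def degLE {n : ℕ} (g : Fq n → ZMod 2) (r : ℕ) : Prop :=
  ∀ l : List (Fq n), l.length = r + 1 → derIter g l = fun _ => 0

/-- Hamming distance between two Boolean functions on `Fq n`. -/
def hdist {n : ℕ} (f g : Fq n → ZMod 2) : ℕ :=
  {x : Fq n | f x ≠ g x}.ncard

/-- The `r`-th order nonlinearity of `f`. -/
def nl {n : ℕ} (r : ℕ) (f : Fq n → ZMod 2) : ℕ :=
  sInf {d : ℕ | ∃ g : Fq n → ZMod 2, degLE g r ∧ d = hdist f g}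

/-- The linear kernel of `f`: directions along which the derivative is constant. -/
def linKer {n : ℕ} (f : Fq n → ZMod 2) : Set (Fq n) :=
  {b | ∃ c : ZMod 2, ∀ x, der f b x = c}

/-- The weight of a Boolean function on `Fq n`. -/
def wt {n : ℕ} (f : Fq n → ZMod 2) : ℕ := {x : Fq n | f x = 1}.ncard

section helpers
set_option linter.unusedSectionVars false

def chi (z : ZMod 2) : ℤ := if z = 0 then 1 else -1

lemma chi_add (x y : ZMod 2) : chi (x + y) = chi x * chi y := by
  revert x y; decide
lemma chi_zero : chi 0 = 1 := by decide
lemma chi_one : chi 1 = -1 := by decide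
lemma chi_abs (x : ZMod 2) : |chi x| = 1 := by revert x; decide
lemma zmod2_cases (x : ZMod 2) : x = 0 ∨ x = 1 := by revert x; decide

variable {F : Type*} [Field F] [Fintype F] [DecidableEq F] [CharP F 2]

lemma sum_shift (h : F → ℤ) (c : F) : ∑ x, h (x + c) = ∑ x, h x :=
  Equiv.sum_comp (Equiv.addRight c) h

lemma sum_chi_zero (h : F → ZMod 2) (c : F) (hc : ∀ x, h (x + c) = h x + 1) :
    ∑ x, chi (h x) = 0 := by
  have h1 := sum_shift (fun x => chi (h x)) c
  simp only [hc, chi_add, chi_one, mul_neg, mul_one, Finset.sum_neg_distrib] at h1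
  linarith

lemma orth (t : F →+ ZMod 2) (hnd : ∀ x, (∀ c, t (c * x) = 0) → x = 0) (u : F) :
    ∑ x, chi (t (x * u)) = if u = 0 then (Fintype.card F : ℤ) else 0 := by
  split_ifs with h
  · simp [h, chi_zero]
  · have : ¬ ∀ c, t (c * u) = 0 := fun h' => h (hnd u h')
    push Not at this
    obtain ⟨c, hc⟩ := this
    apply sum_chi_zero _ c
    intro x
    rw [add_mul, map_add]
    rcases zmod2_cases (t (c * u)) with h | h
    · exact absurd h hc
    · rw [h]

lemma sq_sum (h : F → ZMod 2) :
    (∑ x, chi (h x)) ^ 2 = ∑ a, ∑ x, chi (h x + h (x + a)) := by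
  rw [Finset.sum_comm, sq, Finset.sum_mul]
  refine Finset.sum_congr rfl fun x _ => ?_
  simp only [chi_add]
  rw [← Finset.mul_sum]
  congr 1
  rw [← sum_shift (fun y => chi (h y)) x]
  simp only [add_comm]

/-- elementary Weil bound for `x^7`. -/
lemma weil7 (t : F →+ ZMod 2) (hnd : ∀ x, (∀ c, t (c * x) = 0) → x = 0) (R : ℕ)
    (hR : ∀ d : F, d ≠ 0 → (Finset.univ.filter fun e : F => e ^ 7 = d ^ 7).card ≤ R) :
    (∑ x : F, chi (t (x ^ 7))) ^ 2 ≤ ((R : ℤ) - 1) ^ 2 * Fintype.card F := by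
  set q : ℤ := (Fintype.card F : ℤ) with hq
  have hq1 : 1 < q := by
    have := Fintype.one_lt_card (α := F); rw [hq]; exact_mod_cast this
  set S : F → ℤ := fun u => ∑ d : F, chi (t (u * d ^ 7)) with hS
  have hR1 : (1 : ℤ) ≤ R := by
    have h1 := hR 1 one_ne_zero
    have : 0 < (Finset.univ.filter fun e : F => e ^ 7 = 1 ^ 7).card :=
      Finset.card_pos.mpr ⟨1, by simp⟩
    exact_mod_cast (by omega : 1 ≤ R)
  have hS0 : S 0 = q := by simp [hS, chi_zero, hq]
  have hSd : ∀ d : F, d ≠ 0 → S (d ^ 7) = S 1 := by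
    intro d hd
    simp only [hS, one_mul, ← mul_pow]
    exact Equiv.sum_comp (Equiv.mulLeft₀ d hd) (fun x => chi (t (x ^ 7)))
  set M : F → ℤ := fun u => ((Finset.univ.filter fun e : F => e ^ 7 = u).card : ℤ) with hM
  have hM' : ∀ u, M u = ∑ d : F, if d ^ 7 = u then 1 else 0 := by
    intro u; simp [hM]
  have hM0 : M 0 = 1 := by
    simp only [hM]
    have : (Finset.univ.filter fun e : F => e ^ 7 = 0) = {0} := by ext; simp
    rw [this]; simp
  have hMf : ∀ g : F → ℤ, ∑ u, M u * g u = ∑ d : F, g (d ^ 7) := by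
    intro g
    simp only [hM', Finset.sum_mul]
    rw [Finset.sum_comm]
    refine Finset.sum_congr rfl fun d _ => ?_
    simp
  have hMd : ∑ d : F, M (d ^ 7) ≤ 1 + (q - 1) * R := by
    rw [← Finset.add_sum_erase _ _ (Finset.mem_univ (0 : F))]
    have : ∑ d ∈ Finset.univ.erase (0 : F), M (d ^ 7) ≤ ∑ d ∈ Finset.univ.erase (0 : F), (R : ℤ) := by
      refine Finset.sum_le_sum fun d hd => ?_
      simp only [hM]
      exact_mod_cast hR d (Finset.ne_of_mem_erase hd)
    rw [Finset.sum_const, Finset.card_erase_of_mem (Finset.mem_univ _), Finset.card_univ] at this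
    have h0 : M ((0 : F) ^ 7) = 1 := by simpa using hM0
    rw [h0]
    rw [nsmul_eq_mul, Nat.cast_sub (by have := Fintype.one_lt_card (α := F); omega)] at this
    push_cast at this
    linarith
  have hS1 : ∑ u, S u = q := by
    simp only [hS]
    rw [Finset.sum_comm]
    simp only [orth t hnd]
    rw [Finset.sum_eq_single (0 : F)] <;> simp +contextual [hq]
  have hS2 : ∑ u, S u ^ 2 = q * ∑ d : F, M (d ^ 7) := by
    have : ∀ u, S u ^ 2 = ∑ d : F, ∑ e : F, chi (t (u * (d ^ 7 + e ^ 7))) := by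
      intro u
      simp only [hS, sq, Finset.sum_mul_sum, mul_add, map_add, chi_add]
    simp only [this]
    rw [Finset.sum_comm, Finset.mul_sum]
    refine Finset.sum_congr rfl fun d _ => ?_
    rw [Finset.sum_comm]
    simp only [orth t hnd, hM', Finset.mul_sum]
    refine Finset.sum_congr rfl fun e _ => ?_
    simp only [CharTwo.add_eq_zero]
    by_cases h : e ^ 7 = d ^ 7
    · simp [h, hq]
    · simp [h, Ne.symm h]
  have hsplit : ∀ g : F → ℤ, ∑ u ∈ Finset.univ.erase (0 : F), g u = ∑ u, g u - g 0 := by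
    intro g
    rw [← Finset.add_sum_erase _ _ (Finset.mem_univ (0 : F))]; ring
  have cs := Finset.sum_mul_sq_le_sq_mul_sq (Finset.univ.erase (0 : F)) (fun u => M u - 1) S
  rw [hsplit, hsplit, hsplit] at cs
  have e1 : ∑ u, (M u - 1) * S u = (q - 1) * S 1 + q - q := by
    simp only [sub_mul, one_mul, Finset.sum_sub_distrib, hMf, hS1]
    rw [← Finset.add_sum_erase _ _ (Finset.mem_univ (0 : F))]
    rw [Finset.sum_congr rfl (fun d hd => hSd d (Finset.ne_of_mem_erase hd))]
    rw [Finset.sum_const, Finset.card_erase_of_mem (Finset.mem_univ _), Finset.card_univ,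
      nsmul_eq_mul, Nat.cast_sub (by have := Fintype.one_lt_card (α := F); omega)]
    simp [hS0]; ring
  have e2 : ∑ u, (M u - 1) ^ 2 = ∑ d : F, M (d ^ 7) - q := by
    have : ∀ u, (M u - 1) ^ 2 = M u * (M u - 2) + 1 := fun u => by ring
    simp only [this, Finset.sum_add_distrib, hMf, Finset.sum_sub_distrib]
    simp [hq]; ring
  have hS1' : ∑ x : F, chi (t (x ^ 7)) = S 1 := by simp [hS]
  rw [hS1']
  rw [e1, e2, hS2, hM0, hS0] at cs
  set P := ∑ d : F, M (d ^ 7)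
  have h3 : (P - q) * (q * P - q ^ 2) ≤ (q - 1) ^ 2 * ((R - 1) ^ 2 * q) := by
    have hPq : q ≤ P := by
      have : 0 ≤ ∑ u, (M u - 1) ^ 2 := Finset.sum_nonneg fun _ _ => sq_nonneg _
      linarith
    have : (P - q) ^ 2 ≤ ((q - 1) * (R - 1)) ^ 2 := by
      apply pow_le_pow_left₀ (by linarith); linarith
    nlinarith
  have h4 : (q - 1) ^ 2 * S 1 ^ 2 ≤ (q - 1) ^ 2 * ((R - 1) ^ 2 * q) := by
    refine le_trans (le_of_eq ?_) (cs.trans (le_trans (le_of_eq ?_) h3)) <;> ring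
  exact le_of_mul_le_mul_left h4 (pow_pos (by linarith) 2)

lemma omega_ne {w : F} (hw : w ^ 2 + w + 1 = 0) : w ≠ 0 ∧ w ≠ 1 ∧ w ^ 2 ≠ 1 ∧ w ^ 2 ≠ w := by
  have h2 : (2 : F) = 0 := CharTwo.two_eq_zero
  have h0 : w ≠ 0 := by rintro rfl; simp at hw
  have h1 : w ≠ 1 := by
    rintro rfl
    have : (1 : F) = 0 := by linear_combination hw - h2
    exact one_ne_zero this
  refine ⟨h0, h1, ?_, ?_⟩
  · intro h; apply h0; linear_combination hw - h - h2
  · intro h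
    have : (1 : F) = 0 := by linear_combination hw - h - w * h2
    exact one_ne_zero this

lemma card_E (t : F →+ ZMod 2) (w : F) (hw : w ^ 2 + w + 1 = 0) :
    4 * ((Finset.univ.filter fun e : F => t (e ^ 7) = 0 ∧ t (w * e ^ 7) = 0).card : ℤ)
      = Fintype.card F + 3 * ∑ x : F, chi (t (x ^ 7)) := by
  have h2 : (2 : F) = 0 := CharTwo.two_eq_zero
  obtain ⟨h0, -⟩ := omega_ne hw
  have hp : ∀ z v : ZMod 2, 4 * (if z = 0 ∧ v = 0 then (1 : ℤ) else 0)
      = 1 + chi z + chi v + chi (z + v) := by decide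
  have hsum : ∀ v : F, v ≠ 0 → v ^ 7 = v →
      ∑ x : F, chi (t (v * x ^ 7)) = ∑ x : F, chi (t (x ^ 7)) := by
    intro v hv hv7
    have := Equiv.sum_comp (Equiv.mulLeft₀ v hv) (fun x => chi (t (x ^ 7)))
    simpa [mul_pow, hv7] using this
  have hw3 : w ^ 3 = 1 := by grind
  have hw7 : w ^ 7 = w := by linear_combination (w ^ 4 + w) * hw3
  rw [Finset.card_filter]
  push_cast
  rw [Finset.mul_sum]
  simp only [hp, ← map_add, Finset.sum_add_distrib]
  have h3 : ∀ x : F, x ^ 7 + w * x ^ 7 = w ^ 2 * x ^ 7 := by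
    intro x; linear_combination x ^ 7 * hw - w ^ 2 * x ^ 7 * h2
  simp only [h3]
  rw [hsum w h0 hw7, hsum (w ^ 2) (pow_ne_zero 2 h0) (by rw [← pow_mul, mul_comm, pow_mul, hw7])]
  simp; ring

def Aset (t : F →+ ZMod 2) (w : F) (a : F) : Prop :=
  ∃ y, a ^ 7 * y ^ 3 = 1 ∧ t y = 0 ∧ t (w * y) = 0

open Classical in
lemma card_A (t : F →+ ZMod 2) (w : F) (hw : w ^ 2 + w + 1 = 0) :
    3 * (Finset.univ.filter fun a : F => Aset t w a).card + 1
      ≤ (Finset.univ.filter fun e : F => t (e ^ 7) = 0 ∧ t (w * e ^ 7) = 0).card := by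
  have h2 : (2 : F) = 0 := CharTwo.two_eq_zero
  obtain ⟨h0, h1, hw1, hww⟩ := omega_ne hw
  have hw3 : w ^ 3 = 1 := by grind
  set E := (Finset.univ.filter fun e : F => t (e ^ 7) = 0 ∧ t (w * e ^ 7) = 0) with hE
  have h0E : (0 : F) ∈ E := by simp [hE]
  set E' := E.filter (fun e => e ≠ 0) with hE'
  have hc : E'.card + 1 ≤ E.card := by
    have : E' ⊂ E := by
      refine Finset.filter_ssubset.mpr ⟨0, h0E, by simp⟩
    exact Finset.card_lt_card this
  refine le_trans ?_ hc
  have hEw : ∀ e ∈ E', w * e ∈ E' := by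
    intro e he
    simp only [hE', hE, Finset.mem_filter, Finset.mem_univ, true_and] at he ⊢
    obtain ⟨⟨ha, hb⟩, hc⟩ := he
    have e1 : (w * e) ^ 7 = w * e ^ 7 := by linear_combination (w ^ 4 + w) * e ^ 7 * hw3
    have e2 : w * (w * e ^ 7) = e ^ 7 + w * e ^ 7 := by
      linear_combination e ^ 7 * hw - e ^ 7 * h2 - w * e ^ 7 * h2
    rw [e1, e2, map_add, ha, hb]
    exact ⟨⟨rfl, by simp⟩, mul_ne_zero h0 hc⟩
  have key := Finset.mul_card_image_le_card_of_maps_to (s := E')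
    (t := E'.image fun e => (e⁻¹) ^ 3) (f := fun e => (e⁻¹) ^ 3)
    (fun a ha => Finset.mem_image_of_mem _ ha) 3 ?_
  · have hsub : (Finset.univ.filter fun a : F => Aset t w a) ⊆ E'.image fun e => (e⁻¹) ^ 3 := by
      intro a ha
      obtain ⟨y, hy, ty, twy⟩ := (Finset.mem_filter.mp ha).2
      have e7 : (a ^ 2 * y) ^ 7 = y := by linear_combination (a ^ 7 * y ^ 3 + 1) * y * hy
      refine Finset.mem_image.mpr ⟨a ^ 2 * y, ?_, ?_⟩
      · simp only [hE', hE, Finset.mem_filter, Finset.mem_univ, true_and]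
        rw [e7]
        refine ⟨⟨ty, twy⟩, ?_⟩
        intro h
        rw [h] at e7
        have : y = 0 := by rw [← e7]; simp
        rw [this] at hy; simp at hy
      · rw [inv_pow]
        apply inv_eq_of_mul_eq_one_left
        linear_combination hy
    have := Finset.card_le_card hsub
    omega
  · intro a ha
    obtain ⟨e, he, rfl⟩ := Finset.mem_image.mp ha
    have hne : e ≠ 0 := (Finset.mem_filter.mp he).2
    have hs : ({e, w * e, w * (w * e)} : Finset F) ⊆
        E'.filter (fun x => (x⁻¹) ^ 3 = (e⁻¹) ^ 3) := by
      intro x hx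
      simp only [Finset.mem_insert, Finset.mem_singleton] at hx
      have hx3 : x ^ 3 = e ^ 3 := by
        rcases hx with rfl | rfl | rfl
        · rfl
        · linear_combination e ^ 3 * hw3
        · linear_combination (w ^ 3 + 1) * e ^ 3 * hw3
      rw [Finset.mem_filter, inv_pow, inv_pow, hx3]
      refine ⟨?_, rfl⟩
      rcases hx with rfl | rfl | rfl
      · exact he
      · exact hEw _ he
      · exact hEw _ (hEw _ he)
    have h3 : ({e, w * e, w * (w * e)} : Finset F).card = 3 := by
      rw [Finset.card_eq_three]
      refine ⟨_, _, _, ?_, ?_, ?_, rfl⟩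
      · intro h; exact h1 (mul_right_cancel₀ hne (by rw [one_mul]; exact h.symm))
      · intro h; apply hw1; exact mul_right_cancel₀ hne (by linear_combination -h)
      · intro h; apply hww; exact mul_right_cancel₀ hne (by linear_combination -h)
    exact h3.symm.le.trans (Finset.card_le_card hs)

def tri (a b c : F) : F :=
  c * (a ^ 2 * b ^ 4 + a ^ 4 * b ^ 2) + c ^ 2 * (a * b ^ 4 + a ^ 4 * b)
    + c ^ 4 * (a * b ^ 2 + a ^ 2 * b)

lemma tri_eq (x a b c : F) : ((x ^ 7 + (x + a) ^ 7) + ((x + b) ^ 7 + (x + b + a) ^ 7))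
    + (((x + c) ^ 7 + (x + c + a) ^ 7) + ((x + c + b) ^ 7 + (x + c + b + a) ^ 7)) = tri a b c := by
  have h2 : (2 : F) = 0 := CharTwo.two_eq_zero
  unfold tri
  grind

def Kset (t : F →+ ZMod 2) (a : F) : Finset F := by
  classical exact Finset.univ.filter fun b => ∀ c, t (tri a b c) = 0

def Uset (t : F →+ ZMod 2) (a : F) : Finset F :=
  Finset.univ.filter fun y => a ^ 21 * y ^ 8 + a ^ 7 * (y ^ 4 + y ^ 2) + y = 0 ∧ t y = 0

lemma fourth_surj (d : F) : ∃ c : F, c ^ 4 = d := by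
  have h2 : (2 : F) = 0 := CharTwo.two_eq_zero
  have : Function.Injective (fun x : F => x ^ 4) := by
    intro x y h
    have h : x ^ 4 = y ^ 4 := h
    have h4 : (x - y) ^ 4 = 0 := by
      linear_combination h + (y ^ 4 - 2 * x ^ 3 * y + 3 * x ^ 2 * y ^ 2 - 2 * x * y ^ 3) * h2
    exact sub_eq_zero.mp (pow_eq_zero_iff (by norm_num) |>.mp h4)
  exact Finite.injective_iff_surjective.mp this d

lemma K_to_U (t : F →+ ZMod 2) (ht : ∀ x, t (x ^ 2) = t x)
    (hnd : ∀ x, (∀ c, t (c * x) = 0) → x = 0) (a : F) (ha : a ≠ 0) (b : F) (hb : b ∈ Kset t a) :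
    (b / a) ^ 2 + b / a ∈ Uset t a := by
  have h2 : (2 : F) = 0 := CharTwo.two_eq_zero
  have hb : ∀ c, t (tri a b c) = 0 := by simpa [Kset] using hb
  have ht4 : ∀ x, t (x ^ 4) = t x := by
    intro x; rw [show x ^ 4 = (x ^ 2) ^ 2 by ring, ht, ht]
  have hL := hnd ((a ^ 2 * b ^ 4 + a ^ 4 * b ^ 2) ^ 4 + (a * b ^ 4 + a ^ 4 * b) ^ 2
    + (a * b ^ 2 + a ^ 2 * b)) (by
      intro d
      obtain ⟨c, rfl⟩ := fourth_surj d
      have := hb c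
      unfold tri at this
      rw [map_add, map_add, ← ht4 (c * _), ← ht (c ^ 2 * _), ← map_add, ← map_add] at this
      rw [← this]
      congr 1; ring)
  set β := b / a with hβ
  have hbβ : b = a * β := by rw [hβ]; field_simp
  rw [hbβ] at hL
  simp only [Uset, Finset.mem_filter, Finset.mem_univ, true_and]
  constructor
  · apply mul_left_cancel₀ (pow_ne_zero 3 ha)
    rw [mul_zero]
    rw [← hL]
    clear_value β
    clear hL hb
    have e2 : (β ^ 2 + β) ^ 2 = β ^ 4 + β ^ 2 := by linear_combination β ^ 3 * h2
    have e4 : (β ^ 2 + β) ^ 4 = β ^ 8 + β ^ 4 := by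
      rw [show (β ^ 2 + β) ^ 4 = ((β ^ 2 + β) ^ 2) ^ 2 by ring, e2]
      linear_combination β ^ 6 * h2
    have e8 : (β ^ 2 + β) ^ 8 = β ^ 16 + β ^ 8 := by
      rw [show (β ^ 2 + β) ^ 8 = ((β ^ 2 + β) ^ 4) ^ 2 by ring, e4]
      linear_combination β ^ 12 * h2
    rw [e2, e4, e8]
    have e5 : (a ^ 2 * (a * β) ^ 4 + a ^ 4 * (a * β) ^ 2) ^ 4 = a ^ 24 * (β ^ 16 + β ^ 8) := by
      rw [← e8, show (β ^ 2 + β) ^ 8 = ((β ^ 2 + β) ^ 2) ^ 4 by ring, e2]; ring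
    have e6 : (a * (a * β) ^ 4 + a ^ 4 * (a * β)) ^ 2 = a ^ 10 * (β ^ 8 + β ^ 2) := by
      linear_combination a ^ 10 * β ^ 5 * h2
    rw [e5, e6]
    linear_combination a ^ 10 * β ^ 4 * h2
  · rw [map_add, ht]; exact CharTwo.add_self_eq_zero _

lemma card_K_le (t : F →+ ZMod 2) (ht : ∀ x, t (x ^ 2) = t x)
    (hnd : ∀ x, (∀ c, t (c * x) = 0) → x = 0) (a : F) (ha : a ≠ 0) :
    (Kset t a).card ≤ 2 * (Uset t a).card := by
  have h2 : (2 : F) = 0 := CharTwo.two_eq_zero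
  refine Finset.card_le_mul_card_image_of_maps_to (f := fun b => (b / a) ^ 2 + b / a)
    (fun b hb => K_to_U t ht hnd a ha b hb) 2 ?_
  intro y _
  rcases Finset.eq_empty_or_nonempty
    ((Kset t a).filter fun b => (b / a) ^ 2 + b / a = y) with h | ⟨b0, hb0⟩
  · rw [h]; simp
  · refine le_trans (Finset.card_le_card (t := {b0, b0 + a}) ?_) Finset.card_le_two
    intro b hb
    have h1 := (Finset.mem_filter.mp hb0).2
    have h3 := (Finset.mem_filter.mp hb).2
    rw [← h1] at h3
    have h4 : (b - b0) * (b - (b0 + a)) = 0 := by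
      field_simp at h3
      linear_combination h3 + (b0 ^ 2 + b0 * a - b * b0 - b * a) * h2
    simp only [Finset.mem_insert, Finset.mem_singleton]
    rcases mul_eq_zero.mp h4 with h | h
    · left; exact sub_eq_zero.mp h
    · right; exact sub_eq_zero.mp h

lemma card_U_le (t : F →+ ZMod 2) (a : F) (ha : a ≠ 0) : (Uset t a).card ≤ 8 := by
  classical
  open Polynomial in
  let p : F[X] := C (a ^ 21) * X ^ 8 + C (a ^ 7) * (X ^ 4 + X ^ 2) + X
  have hd : p.natDegree = 8 := by
    simp only [p]
    compute_degree!
  have hp : p ≠ 0 := by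
    intro h; rw [h] at hd; simp at hd
  have : Uset t a ⊆ p.roots.toFinset := by
    intro y hy
    have hy := (Finset.mem_filter.mp hy).2.1
    rw [Multiset.mem_toFinset, Polynomial.mem_roots hp]
    simpa [p, Polynomial.IsRoot] using hy
  calc _ ≤ _ := Finset.card_le_card this
    _ ≤ _ := Multiset.toFinset_card_le _
    _ ≤ _ := Polynomial.card_roots' p
    _ = 8 := hd

lemma mixed (t : F →+ ZMod 2) (ht : ∀ x, t (x ^ 2) = t x) (w : F) (hw : w ^ 2 + w + 1 = 0)
    (c y z : F) (hy : c * y ^ 3 = 1) (hz : c ^ 2 * z ^ 4 + c * z = 1) :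
    t y = 0 ∧ t (w * y) = 0 := by
  have h2 : (2 : F) = 0 := CharTwo.two_eq_zero
  have hw3 : w ^ 3 = 1 := by grind
  have ht4 : ∀ x, t (x ^ 4) = t x := by
    intro x; rw [show x ^ 4 = (x ^ 2) ^ 2 by ring, ht, ht]
  have hy0 : y ≠ 0 := by rintro rfl; simp at hy
  set s := z / y with hs
  have hzs : z = y * s := by rw [hs]; field_simp
  have hys : y ^ 2 = s ^ 4 + s := by
    rw [hzs] at hz
    clear_value s
    linear_combination -y ^ 2 * hz + (s ^ 4 * (c * y ^ 3 + 1) + s) * hy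
  constructor
  · rw [← ht, hys, map_add, ht4]; exact CharTwo.add_self_eq_zero _
  · rw [← ht, mul_pow, hys, show w ^ 2 * (s ^ 4 + s) = (w ^ 2 * s) ^ 4 + w ^ 2 * s by
      linear_combination -(w ^ 5 + w ^ 2) * s ^ 4 * hw3, map_add, ht4]
    exact CharTwo.add_self_eq_zero _

lemma card_U_le_two (t : F →+ ZMod 2) (ht : ∀ x, t (x ^ 2) = t x) (w : F)
    (hw : w ^ 2 + w + 1 = 0) (a : F) (hA : ¬ Aset t w a) : (Uset t a).card ≤ 2 := by
  have h2 : (2 : F) = 0 := CharTwo.two_eq_zero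
  have hfac : ∀ y ∈ Uset t a, y ≠ 0 →
      (a ^ 7 * y ^ 3 = 1 ∨ (a ^ 7) ^ 2 * y ^ 4 + a ^ 7 * y = 1) ∧ t y = 0 := by
    intro y hy hy0
    obtain ⟨h, hty⟩ := (Finset.mem_filter.mp hy).2
    refine ⟨?_, hty⟩
    have : y * ((a ^ 7 * y ^ 3 - 1) * ((a ^ 7) ^ 2 * y ^ 4 + a ^ 7 * y - 1)) = 0 := by
      linear_combination h - (a ^ 7 * y ^ 4 + a ^ 7 * y ^ 2) * h2
    rcases mul_eq_zero.mp this with h | h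
    · exact absurd h hy0
    rcases mul_eq_zero.mp h with h | h
    · left; exact sub_eq_zero.mp h
    · right; exact sub_eq_zero.mp h
  have h1 : ((Uset t a).erase 0).card ≤ 1 := by
    rw [Finset.card_le_one]
    intro y hy z hz
    by_contra hyz
    apply hA
    obtain ⟨hy0, hy⟩ := Finset.mem_erase.mp hy
    obtain ⟨hz0, hz⟩ := Finset.mem_erase.mp hz
    obtain ⟨cy, ty⟩ := hfac y hy hy0
    obtain ⟨cz, tz⟩ := hfac z hz hz0
    rcases cy with cy | cy <;> rcases cz with cz | cz
    · have ha : a ^ 7 ≠ 0 := by intro h; rw [h] at cy; simp at cy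
      have h3 : y ^ 3 = z ^ 3 := mul_left_cancel₀ ha (cy.trans cz.symm)
      have h4 : (y - z) * ((z - w * y) * (z - w ^ 2 * y)) = 0 := by grind
      refine ⟨y, cy, ty, ?_⟩
      rcases mul_eq_zero.mp h4 with h | h
      · exact absurd (sub_eq_zero.mp h) hyz
      rcases mul_eq_zero.mp h with h | h
      · rw [← sub_eq_zero.mp h]; exact tz
      · have : w * y = z + y := by
          linear_combination y * hw - h - y * h2 - w ^ 2 * y * h2 + z * h2 - z * h2
        rw [this, map_add, ty, tz]; rfl
    · obtain ⟨p, r⟩ := mixed t ht w hw (a ^ 7) y z cy cz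
      exact ⟨y, cy, p, r⟩
    · obtain ⟨p, r⟩ := mixed t ht w hw (a ^ 7) z y cz cy
      exact ⟨z, cz, p, r⟩
    · have hu : y - z ≠ 0 := sub_ne_zero.mpr hyz
      have ha : a ^ 7 ≠ 0 := by intro h; rw [h] at cy; simp at cy
      have hc : a ^ 7 * (y - z) ^ 3 = 1 := by
        apply mul_left_cancel₀ (mul_ne_zero ha hu)
        linear_combination cy - cz + (- a ^ 14 * (2 * y ^ 3 * z - 3 * y ^ 2 * z ^ 2 + 2 * y * z ^ 3 - z ^ 4) - a ^ 7 * (y - z)) * h2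
      obtain ⟨p, r⟩ := mixed t ht w hw (a ^ 7) (y - z) y hc cy
      exact ⟨y - z, hc, p, r⟩
  have := Finset.pred_card_le_card_erase (s := Uset t a) (a := 0)
  omega

lemma walsh_der_sq (t : F →+ ZMod 2) (h : F → ZMod 2)
    (hh : ∀ x a b c, ((h x + h (x + a)) + (h (x + b) + h (x + b + a)))
      + ((h (x + c) + h (x + c + a)) + (h (x + c + b) + h (x + c + b + a))) = t (tri a b c))
    (a : F) :
    (∑ x, chi (h x + h (x + a))) ^ 2 ≤ Fintype.card F * (Kset t a).card := by
  rw [sq_sum (fun x => h x + h (x + a))]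
  have hb : ∀ b, ∑ x, chi (h x + h (x + a) + (h (x + b) + h (x + b + a)))
      ≤ if b ∈ Kset t a then (Fintype.card F : ℤ) else 0 := by
    intro b
    split_ifs with hK
    · refine (Finset.sum_le_sum (g := fun _ => (1 : ℤ)) fun x _ => ?_).trans (by simp)
      exact (le_abs_self _).trans (chi_abs _).le
    · apply le_of_eq
      have : ¬ ∀ c, t (tri a b c) = 0 := by simpa [Kset] using hK
      push Not at this
      obtain ⟨c, hc⟩ := this
      apply sum_chi_zero _ c
      intro x
      have h1 : t (tri a b c) = 1 := (zmod2_cases _).resolve_left hc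
      have h3 := hh x a b c
      rw [h1] at h3
      have key : ∀ p r : ZMod 2, p + r = 1 → r = p + 1 := by decide
      exact key _ _ h3
  refine (Finset.sum_le_sum fun b _ => hb b).trans ?_
  rw [Finset.sum_ite_mem]
  simp [mul_comm]

lemma walsh_bound (t : F →+ ZMod 2) (ht : ∀ x, t (x ^ 2) = t x)
    (hnd : ∀ x, (∀ c, t (c * x) = 0) → x = 0) (w : F) (hw : w ^ 2 + w + 1 = 0)
    (Q : ℤ) (hQ0 : 0 < Q) (hQ : (Fintype.card F : ℤ) = Q ^ 2) (h : F → ZMod 2)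
    (hh : ∀ x a b c, ((h x + h (x + a)) + (h (x + b) + h (x + b + a)))
      + ((h (x + c) + h (x + c + a)) + (h (x + c + b) + h (x + c + b + a))) = t (tri a b c)) :
    6 * (∑ x, chi (h x)) ^ 2 ≤ 6 * Q ^ 2 + 12 * Q * (Q ^ 2 - 1)
      + Q * (Q ^ 2 + 3 * (∑ x : F, chi (t (x ^ 7))) - 4) := by
  classical
  have hA := card_A t w hw
  have hE := card_E t w hw
  rw [hQ] at hE
  rw [sq_sum]
  have ha : ∀ a ∈ Finset.univ.erase (0 : F), ∑ x, chi (h x + h (x + a))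
      ≤ 2 * Q + if Aset t w a then 2 * Q else 0 := by
    intro a ha
    have ha0 := Finset.ne_of_mem_erase ha
    have h1 := walsh_der_sq t h hh a
    rw [hQ] at h1
    have h2 := card_K_le t ht hnd a ha0
    split_ifs with hAa
    · have h3 := card_U_le t a ha0
      have h4 : ((Kset t a).card : ℤ) ≤ 16 := by exact_mod_cast (by omega)
      refine le_of_abs_le (abs_le_of_sq_le_sq ?_ (by linarith))
      nlinarith [sq_nonneg Q]
    · have h3 := card_U_le_two t ht w hw a hAa
      have h4 : ((Kset t a).card : ℤ) ≤ 4 := by exact_mod_cast (by omega)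
      refine le_of_abs_le (abs_le_of_sq_le_sq ?_ (by linarith))
      nlinarith [sq_nonneg Q]
  rw [← Finset.add_sum_erase _ _ (Finset.mem_univ (0 : F))]
  have h0 : ∑ x, chi (h x + h (x + 0)) = Q ^ 2 := by
    rw [← hQ]
    simp [CharTwo.add_self_eq_zero, chi_zero]
  have hsum := Finset.sum_le_sum ha
  rw [Finset.sum_add_distrib, Finset.sum_const, Finset.card_erase_of_mem (Finset.mem_univ _),
    Finset.card_univ, nsmul_eq_mul, Nat.cast_sub Fintype.card_pos, hQ] at hsum
  have hN : ∑ a ∈ Finset.univ.erase (0 : F), (if Aset t w a then 2 * Q else 0)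
      ≤ 2 * Q * ((Finset.univ.filter fun a : F => Aset t w a).card : ℤ) := by
    refine (Finset.sum_le_sum_of_subset_of_nonneg (Finset.subset_univ _) ?_).trans ?_
    · intro i _ _; split_ifs <;> linarith
    · rw [← Finset.sum_filter, Finset.sum_const, nsmul_eq_mul, mul_comm]
  have hA' : 3 * ((Finset.univ.filter fun a : F => Aset t w a).card : ℤ) + 1 ≤
    ((Finset.univ.filter fun e : F => t (e ^ 7) = 0 ∧ t (w * e ^ 7) = 0).card : ℤ) := by
    exact_mod_cast hA
  set N : ℤ := ((Finset.univ.filter fun a : F => Aset t w a).card : ℤ)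
  set S := ∑ x : F, chi (t (x ^ 7))
  have h12 : 12 * N ≤ Q ^ 2 + 3 * S - 4 := by linarith
  have h13 := mul_le_mul_of_nonneg_left h12 hQ0.le
  push_cast at hsum
  rw [h0]
  linarith

lemma seven_fiber (d : F) : (Finset.univ.filter fun e : F => e ^ 7 = d ^ 7).card ≤ 7 := by
  have : (Finset.univ.filter fun e : F => e ^ 7 = d ^ 7) ⊆
      (Polynomial.nthRoots 7 (d ^ 7)).toFinset := by
    intro e he
    rw [Multiset.mem_toFinset, Polynomial.mem_nthRoots (by norm_num)]
    exact (Finset.mem_filter.mp he).2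
  exact (Finset.card_le_card this).trans
    ((Multiset.toFinset_card_le _).trans (Polynomial.card_nthRoots 7 _))

lemma one_fiber (n : ℕ) (hn : 0 < n) (h3 : ¬ 3 ∣ n) (hc : Fintype.card F = 2 ^ n) (d : F)
    (hd : d ≠ 0) : (Finset.univ.filter fun e : F => e ^ 7 = d ^ 7).card ≤ 1 := by
  have hcop : Nat.gcd 7 (2 ^ n - 1) = 1 := by
    have := Nat.pow_sub_one_gcd_pow_sub_one 2 3 n
    have h : Nat.gcd 3 n = 1 := (Nat.Prime.coprime_iff_not_dvd Nat.prime_three).mpr h3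
    rw [h] at this
    simpa using this
  rw [Finset.card_le_one]
  have key : ∀ e : F, e ^ 7 = d ^ 7 → e = d := by
    intro e he
    have hz7 : (e / d) ^ 7 = 1 := by rw [div_pow, he, div_self (pow_ne_zero 7 hd)]
    have hz0 : e / d ≠ 0 := by intro h; rw [h] at hz7; simp at hz7
    have hzq : (e / d) ^ (2 ^ n - 1) = 1 := by
      rw [← hc]; exact FiniteField.pow_card_sub_one_eq_one _ hz0
    have h1 : orderOf (e / d) ∣ Nat.gcd 7 (2 ^ n - 1) :=
      Nat.dvd_gcd (orderOf_dvd_of_pow_eq_one hz7) (orderOf_dvd_of_pow_eq_one hzq)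
    rw [hcop, Nat.dvd_one, orderOf_eq_one_iff] at h1
    exact (div_eq_one_iff_eq hd).mp h1
  intro a ha b hb
  rw [key a (Finset.mem_filter.mp ha).2, key b (Finset.mem_filter.mp hb).2]

lemma exists_omega (m : ℕ) (hc : Fintype.card F = 2 ^ (2 * m)) :
    ∃ w : F, w ^ 2 + w + 1 = 0 := by
  have hd : 3 ∣ Fintype.card Fˣ := by
    rw [Fintype.card_units, hc, pow_mul]
    simpa using Nat.sub_dvd_pow_sub_pow 4 1 m
  haveI : Fact (Nat.Prime 3) := ⟨Nat.prime_three⟩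
  obtain ⟨w, hw⟩ := exists_prime_orderOf_dvd_card 3 hd
  have h3 : w ^ 3 = 1 := by rw [← hw]; exact pow_orderOf_eq_one w
  have h1 : w ≠ 1 := by rintro rfl; simp at hw
  have h3' : (w : F) ^ 3 = 1 := by
    rw [← Units.val_pow_eq_pow_val, h3, Units.val_one]
  have h1' : (w : F) - 1 ≠ 0 := sub_ne_zero.mpr (by simpa using h1)
  refine ⟨w, mul_left_cancel₀ h1' ?_⟩
  linear_combination h3'

end helpers

lemma final_dist (n m : ℕ) (hnm : n = 2 * m) (hm : 0 < m) (f : Fq n → ZMod 2)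
    (hf : ∀ x, f x = tr (x ^ 7)) :
    ∃ d W S : ℤ, (nl 2 f : ℤ) = d ∧ W = (2 ^ m) ^ 2 - 2 * d ∧
      6 * W ^ 2 ≤ 6 * (2 ^ m) ^ 2 + 12 * 2 ^ m * ((2 ^ m) ^ 2 - 1)
        + 2 ^ m * ((2 ^ m) ^ 2 + 3 * S - 4) ∧
      S ≤ 6 * 2 ^ m ∧ (¬ 3 ∣ n → S = 0) := by
  classical
  letI : Fintype (Fq n) := Fintype.ofFinite _
  have hn : n ≠ 0 := by omega
  haveI : CharP (Fq n) 2 := inferInstance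
  have hcard : Fintype.card (Fq n) = 2 ^ n := by
    rw [← Nat.card_eq_fintype_card]; exact GaloisField.card 2 n hn
  let t : Fq n →+ ZMod 2 := (Algebra.trace (ZMod 2) (Fq n)).toAddMonoidHom
  have htr : ∀ x, t x = tr x := fun x => rfl
  have ht : ∀ x, t (x ^ 2) = t x := by
    intro x
    have := Algebra.trace_eq_of_algEquiv
      (FiniteField.frobeniusAlgEquivOfAlgebraic (ZMod 2) (Fq n)) x
    rw [FiniteField.coe_frobeniusAlgEquivOfAlgebraic, ZMod.card] at this
    exact this
  have hnd : ∀ x, (∀ c, t (c * x) = 0) → x = 0 := by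
    intro x hx
    have := (traceForm_nondegenerate (ZMod 2) (Fq n)).1 x
    apply this
    intro c
    rw [Algebra.traceForm_apply, mul_comm]
    exact hx c
  obtain ⟨w, hw⟩ := exists_omega (F := Fq n) m (by rw [hcard, hnm])
  have hQ : (Fintype.card (Fq n) : ℤ) = (2 ^ m) ^ 2 := by
    rw [hcard, hnm]; push_cast; ring
  have hne : {d : ℕ | ∃ g : Fq n → ZMod 2, degLE g 2 ∧ d = hdist f g}.Nonempty := by
    refine ⟨_, fun _ => 0, ?_, rfl⟩
    intro l _
    clear * -
    induction l with
    | nil => rfl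
    | cons a l ih => rw [derIter, ih]; funext x; simp [der]
  obtain ⟨g, hg, hdg⟩ := Nat.sInf_mem hne
  have hwb := walsh_bound t ht hnd w hw (2 ^ m) (by positivity) hQ (fun x => f x + g x) (by
    intro x a b c
    have h1 := congrFun (hg [c, b, a] rfl) x
    simp only [derIter, der] at h1
    rw [← tri_eq x]
    have hf' : ∀ x, t (x ^ 7) = f x := fun x => (hf x).symm
    simp only [map_add, hf']
    linear_combination h1)
  refine ⟨hdist f g, _, _, by exact_mod_cast hdg, ?_, hwb, ?_, ?_⟩
  · rw [← hQ]
    have : ∀ z v : ZMod 2, chi (z + v) = 1 - 2 * (if z ≠ v then 1 else 0) := by decide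
    simp only [this, Finset.sum_sub_distrib, ← Finset.mul_sum]
    simp only [hdist, Set.ncard_eq_toFinset_card']
    simp [Finset.card_filter, ite_not]
  · have := weil7 t hnd 7 (fun d _ => seven_fiber d)
    rw [hQ] at this
    refine le_of_abs_le (abs_le_of_sq_le_sq ?_ (by positivity))
    refine this.trans (le_of_eq ?_)
    push_cast; ring
  · intro h3
    have := weil7 t hnd 1 (fun d hd => one_fiber n (by omega) h3 hcard d hd)
    simp only [Nat.cast_one, sub_self] at this
    have h0 := le_antisymm (this.trans (le_of_eq (by ring))) (sq_nonneg _)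
    exact pow_eq_zero_iff (by norm_num) |>.mp h0

/-- Second-order nonlinearity lower bound for `tr(x^7)`, even `n`. -/
theorem second_order_nl_tr_x7_even (n : ℕ) (hn : 0 < n) (hev : Even n)
    (f : Fq n → ZMod 2) (hf : ∀ x, f x = tr (x ^ 7)) :
    (¬ (3 ∣ n) →
      (nl 2 f : ℝ) ≥ (2:ℝ) ^ ((n:ℝ) - 1) - (1/2) * Real.sqrt
        ((13/3) * (2:ℝ) ^ (3 * (n:ℝ) / 2 - 1) + (2:ℝ) ^ (n:ℝ)
          - (1/3) * (2:ℝ) ^ ((n:ℝ) / 2 + 3))) ∧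
    ((3 ∣ n) →
      (nl 2 f : ℝ) ≥ (2:ℝ) ^ ((n:ℝ) - 1) - (1/2) * Real.sqrt
        ((13/3) * (2:ℝ) ^ (3 * (n:ℝ) / 2 - 1) + (2:ℝ) ^ ((n:ℝ) + 2)
          - (1/3) * (2:ℝ) ^ ((n:ℝ) / 2 + 3))) := by
  obtain ⟨m, hm⟩ := hev
  have hnm : n = 2 * m := by omega
  obtain ⟨d, W, S, hd, hW, hb, hS, hS0⟩ := final_dist n m hnm (by omega) f hf
  have hd' : (nl 2 f : ℝ) = d := by exact_mod_cast hd
  have hnR : (n : ℝ) = 2 * m := by rw [hnm]; push_cast; ring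
  have hWR : (W : ℝ) = (2 ^ m) ^ 2 - 2 * d := by exact_mod_cast hW
  have hbR : 6 * (W : ℝ) ^ 2 ≤ 6 * (2 ^ m) ^ 2 + 12 * 2 ^ m * ((2 ^ m) ^ 2 - 1)
        + 2 ^ m * ((2 ^ m) ^ 2 + 3 * S - 4) := by exact_mod_cast hb
  have hSR : (S : ℝ) ≤ 6 * 2 ^ m := by exact_mod_cast hS
  have two : (0 : ℝ) < 2 := by norm_num
  have p1 : (2 : ℝ) ^ ((n : ℝ) - 1) = (2 ^ m) ^ 2 / 2 := by
    rw [Real.rpow_sub two, hnm, Real.rpow_natCast, Real.rpow_one, mul_comm, pow_mul]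
  have p2 : (2 : ℝ) ^ (3 * (n : ℝ) / 2 - 1) = (2 ^ m) ^ 3 / 2 := by
    rw [Real.rpow_sub two, hnR, show 3 * (2 * (m : ℝ)) / 2 = ((m * 3 : ℕ) : ℝ) by push_cast; ring,
      Real.rpow_natCast, Real.rpow_one, pow_mul]
  have p3 : (2 : ℝ) ^ (n : ℝ) = (2 ^ m) ^ 2 := by
    rw [hnm, Real.rpow_natCast, mul_comm, pow_mul]
  have p4 : (2 : ℝ) ^ ((n : ℝ) / 2 + 3) = 8 * 2 ^ m := by
    rw [hnR, show 2 * (m : ℝ) / 2 + 3 = ((m + 3 : ℕ) : ℝ) by push_cast; ring,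
      Real.rpow_natCast, pow_add]; ring
  have p5 : (2 : ℝ) ^ ((n : ℝ) + 2) = 4 * (2 ^ m) ^ 2 := by
    rw [Real.rpow_add two, p3, Real.rpow_two]; ring
  rw [p1, p2, p3, p4, p5, hd']
  set Q : ℝ := 2 ^ m with hQ
  have hQ0 : 0 < Q := by positivity
  constructor
  · intro h3
    have hS0R : (S : ℝ) = 0 := by exact_mod_cast hS0 h3
    have : W ≤ Real.sqrt (13 / 3 * (Q ^ 3 / 2) + Q ^ 2 - 1 / 3 * (8 * Q)) := by
      apply Real.le_sqrt_of_sq_le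
      rw [hS0R] at hbR
      linarith
    linarith
  · intro _
    have : W ≤ Real.sqrt (13 / 3 * (Q ^ 3 / 2) + 4 * Q ^ 2 - 1 / 3 * (8 * Q)) := by
      apply Real.le_sqrt_of_sq_le
      have := mul_le_mul_of_nonneg_left hSR hQ0.le
      linarith
    linarith
end
end

section
/- Let n be an odd positive integer and let f : F → 𝔽₂ be defined by f(x) = tr(x^7). If 3 does not divide n, then nl₂(f) ≥ 2^{n−1} − (1/2)·√(3·2^{(3n−1)/2} + 2^n − 2^{(n+3)/2}); if 3 divides n, then nl₂(f) ≥ 2^{n−1} − (1/2)·√(3·2^{(3n−1)/2} + 2^n + 3·2^{n + 1/2} − 2^{(n+3)/2}). -/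
noncomputable section

/-- The sign character on `ZMod 2`. -/
def sg (t : ZMod 2) : ℝ := if t = 0 then 1 else -1

lemma sg_add (s t : ZMod 2) : sg (s + t) = sg s * sg t := by
  have h : ∀ s : ZMod 2, s = 0 ∨ s = 1 := by decide
  have h2 : (1 : ZMod 2) + 1 = 0 := by decide
  rcases h s with rfl | rfl <;> rcases h t with rfl | rfl <;> simp [sg, h2]

lemma sg_one : sg 1 = -1 := by simp [sg]
lemma sg_zero : sg 0 = 1 := by simp [sg]

lemma abs_sg (t : ZMod 2) : |sg t| = 1 := by
  unfold sg; split_ifs <;> simp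

lemma z2_ne_zero {t : ZMod 2} (h : t ≠ 0) : t = 1 := by
  revert t; decide


lemma pow7_expand {F : Type*} [Field F] [CharP F 2] (a b c x : F) :
    ((x^7+(x+a)^7) + ((x+b)^7+(x+b+a)^7)) + (((x+c)^7+(x+c+a)^7) + ((x+c+b)^7+(x+c+b+a)^7)) =
    (a^2*b^4+a^4*b^2)*c + (a*b^4+a^4*b)*c^2+(a*b^2+a^2*b)*c^4 := by
  have e7 : ∀ y : F, y ^ 7 = y * y ^ 2 * (y^2)^2 := fun y => by ring
  have h2 : (2 : F) = 0 := CharTwo.two_eq_zero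
  simp only [e7, CharTwo.add_sq]
  linear_combination (4*x*x^2*x^4 + 2*x*x^2*c^4 + 2*x*c^2*x^4 + 2*x*c^2*c^4 + 2*c*x^2*x^4 + 2*c*x^2*c^4 + 2*c*c^2*x^4 + 2*c*c^2*c^4 + 2*x*x^2*b^4 + 2*x*b^2*x^4 + 2*x*b^2*b^4 + 2*b*x^2*x^4 + 2*b*x^2*b^4 + 2*b*b^2*x^4 + 2*b*b^2*b^4 + 1*x*b^2*c^4 + 1*x*c^2*b^4 + 1*b*x^2*c^4 + 1*b*b^2*c^4 + 1*b*c^2*x^4 + 1*b*c^2*b^4 + 1*b*c^2*c^4 + 1*c*x^2*b^4 + 1*c*b^2*x^4 + 1*c*b^2*b^4 + 1*c*b^2*c^4 + 1*c*c^2*b^4 + 2*x*x^2*a^4 + 2*x*a^2*x^4 + 2*x*a^2*a^4 + 2*a*x^2*x^4 + 2*a*x^2*a^4 + 2*a*a^2*x^4 + 2*a*a^2*a^4 + 1*x*a^2*c^4 + 1*x*c^2*a^4 + 1*a*x^2*c^4 + 1*a*a^2*c^4 + 1*a*c^2*x^4 + 1*a*c^2*a^4 + 1*a*c^2*c^4 +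 1*c*x^2*a^4 + 1*c*a^2*x^4 + 1*c*a^2*a^4 + 1*c*a^2*c^4 + 1*c*c^2*a^4 + 1*x*a^2*b^4 + 1*x*b^2*a^4 + 1*a*x^2*b^4 + 1*a*a^2*b^4 + 1*a*b^2*x^4 + 1*a*b^2*a^4 + 1*a*b^2*b^4 + 1*b*x^2*a^4 + 1*b*a^2*x^4 + 1*b*a^2*a^4 + 1*b*a^2*b^4 + 1*b*b^2*a^4) * h2

lemma sq_sum_sg {F : Type*} [Field F] [Fintype F] (h : F → ZMod 2) :
    (∑ x, sg (h x)) ^ 2 = ∑ a, ∑ x, sg (h x + h (x + a)) := by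
  rw [sq, Finset.sum_mul_sum, Finset.sum_comm (s := Finset.univ) (t := Finset.univ)
    (f := fun a x => sg (h x + h (x + a)))]
  refine Finset.sum_congr rfl fun x _ => ?_
  rw [← Equiv.sum_comp (Equiv.addLeft x)]
  refine Finset.sum_congr rfl fun y _ => ?_
  simp [sg_add]

lemma sum_sg_zero {F : Type*} [Field F] [Fintype F] (h : F → ZMod 2) (c : F)
    (hc : ∀ x, h x + h (x + c) = 1) : ∑ x, sg (h x) = 0 := by
  have h1 : ∑ x, sg (h x) = ∑ x, sg (h (x + c)) :=
    (Equiv.sum_comp (Equiv.addRight c) (fun x => sg (h x))).symm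
  have h2 : ∀ x, sg (h (x + c)) = - sg (h x) := by
    intro x
    have h3 : h (x + c) = h x + 1 := by
      have := hc x
      generalize h x = u at *
      generalize h (x + c) = v at *
      revert u v; decide
    rw [h3, sg_add, sg_one]; ring
  simp only [h2, Finset.sum_neg_distrib] at h1
  linarith

lemma sum_sg_le {F : Type*} [Field F] [Fintype F] (h : F → ZMod 2) :
    ∑ x, sg (h x) ≤ (Fintype.card F : ℝ) := by
  calc ∑ x, sg (h x) ≤ ∑ x : F, (1 : ℝ) :=
        Finset.sum_le_sum fun x _ => (le_abs_self _).trans (abs_sg _).le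
    _ = _ := by simp

lemma quad_bound {F : Type*} [Field F] [Fintype F] [DecidableEq F] (h : F → ZMod 2)
    (K : Finset F)
    (hK : ∀ b, b ∉ K → ∃ c, ∀ x, (h x + h (x + b)) + (h (x + c) + h (x + c + b)) = 1) :
    (∑ x, sg (h x)) ^ 2 ≤ K.card * (Fintype.card F : ℝ) := by
  rw [sq_sum_sg, ← Finset.sum_subset (Finset.subset_univ K)]
  · calc ∑ a ∈ K, ∑ x, sg (h x + h (x + a)) ≤ ∑ a ∈ K, (Fintype.card F : ℝ) :=
          Finset.sum_le_sum fun a _ => sum_sg_le (fun x => h x + h (x + a))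
      _ = _ := by simp
  · intro b _ hb
    obtain ⟨c, hc⟩ := hK b hb
    exact sum_sg_zero (fun x => h x + h (x + b)) c hc

/-- The polynomial defining the linear kernel. -/
def PP {F : Type*} [Field F] (a b : F) : F :=
  (a^2*b^4+a^4*b^2)^4 + (a*b^4+a^4*b)^2 + (a*b^2+a^2*b)

lemma third_der {F : Type*} [Field F] [CharP F 2] (T : F →+ ZMod 2)
    (hT2 : ∀ x, T (x ^ 2) = T x) (a b c x : F) :
    ((T (x^7) + T ((x+a)^7)) + (T ((x+b)^7) + T ((x+b+a)^7))) +
      ((T ((x+c)^7) + T ((x+c+a)^7)) + (T ((x+c+b)^7) + T ((x+c+b+a)^7)))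
      = T (PP a b * c ^ 4) := by
  simp only [← map_add]
  rw [pow7_expand, PP]
  have h1 : T ((a^2*b^4+a^4*b^2)*c) = T ((a^2*b^4+a^4*b^2)^4*c^4) := by
    rw [← hT2, ← hT2]; congr 1; ring
  have h2 : T ((a*b^4+a^4*b)*c^2) = T ((a*b^4+a^4*b)^2*c^4) := by
    rw [← hT2]; congr 1; ring
  have e1 : ∀ A B C D : F, T ((A + B + C) * D) = T (A * D) + T (B * D) + T (C * D) := by
    intro A B C D; simp only [add_mul, map_add]
  have e2 : ∀ A B C : F, T (A + B + C) = T A + T B + T C := by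
    intro A B C; simp only [map_add]
  rw [e1, e2, h1, h2]

lemma card_two_of {F : Type*} [Field F] [DecidableEq F] (S : Finset F) (k : F)
    (h : ∀ x ∈ S, ∀ y ∈ S, y = x ∨ y = x + k) : S.card ≤ 2 := by
  rcases S.eq_empty_or_nonempty with rfl | ⟨x, hx⟩
  · simp
  · have : S ⊆ {x, x + k} := by
      intro y hy
      simpa using h x hx y hy
    exact (Finset.card_le_card this).trans Finset.card_le_two

lemma PP_factor {F : Type*} [Field F] [CharP F 2] (t b : F) (ht : t ≠ 0)
    (hP : PP ((t^3)⁻¹) b = 0) (hc : ∀ x y : F, x ^ 3 = y ^ 3 → x = y) :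
    (b*t^3)^2 + b*t^3 = 0 ∨ (b*t^3)^2 + b*t^3 = t^7 ∨
      ((b*t^3)^2 + b*t^3)^4 + (t^7)^3 * ((b*t^3)^2 + b*t^3) + (t^7)^6 = 0 := by
  have h2 : (2 : F) = 0 := CharTwo.two_eq_zero
  obtain ⟨u, rfl⟩ : ∃ u, b = u / t^3 := ⟨b * t^3, by field_simp⟩
  have hu : u / t^3 * t^3 = u := by field_simp
  rw [hu]
  have hQ : (u^16+u^8)+t^42*(u^8+u^2)+t^63*(u^2+u) = 0 := by
    have : PP ((t^3)⁻¹) (u / t^3) * t^72 = (u^16+u^8)+t^42*(u^8+u^2)+t^63*(u^2+u) := by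
      have e2 : ∀ x y : F, (x + y)^4 = x^4+y^4 := fun x y => by
        rw [show (4:ℕ) = 2*2 from rfl, pow_mul, pow_mul, pow_mul, CharTwo.add_sq, CharTwo.add_sq]
      rw [PP, e2, CharTwo.add_sq]
      field_simp
      try ring
    rw [← this, hP, zero_mul]
  set v := u^2+u with hv
  have v2 : v^2 = u^4+u^2 := by rw [hv, CharTwo.add_sq]; ring
  have v4 : v^4 = u^8+u^4 := by
    rw [show v^4 = (v^2)^2 by ring, v2, CharTwo.add_sq]; ring
  have v8 : v^8 = u^16+u^8 := by
    rw [show v^8 = (v^4)^2 by ring, v4, CharTwo.add_sq]; ring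
  have hprod : v * ((v^3+(t^7)^3) * (v^4 + (t^7)^3*v+(t^7)^6)) = 0 := by
    have hQv : v^8 + t^42*(v^4+v^2) + t^63*v = 0 := by
      rw [v8, v4, v2]
      linear_combination hQ + t^42*u^4*h2
    linear_combination hQv + t^21*v^5*h2
  rcases mul_eq_zero.1 hprod with h | h
  · exact Or.inl h
  rcases mul_eq_zero.1 h with h | h
  · right; left
    apply hc
    linear_combination h - (t^7)^3*h2
  · exact Or.inr (Or.inr h)

lemma sq_eq_self {F : Type*} [Field F] [CharP F 2] (u w : F) (h : u^2+u = w^2+w) :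
    w = u ∨ w = u + 1 := by
  have h2 : (2 : F) = 0 := CharTwo.two_eq_zero
  have : (w - u) * (w - (u+1)) = 0 := by linear_combination -h  + (-u*w+u^2 + u - w) * h2
  rcases mul_eq_zero.1 this with h | h
  · left; exact sub_eq_zero.1 h
  · right; exact sub_eq_zero.1 h

lemma fourth_eq {F : Type*} [Field F] [CharP F 2] (hc : ∀ x y : F, x ^ 3 = y ^ 3 → x = y)
    (s e v w : F) (hv : v^4 + s^3*v + e = 0) (hw : w^4+s^3*w+e = 0) :
    w = v ∨ w = v + s := by
  have h2 : (2 : F) = 0 := CharTwo.two_eq_zero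
  have e4 : (v + w)^4 = v^4+w^4 := by
    rw [show (4:ℕ) = 2*2 from rfl, pow_mul, pow_mul, pow_mul, CharTwo.add_sq, CharTwo.add_sq]
  have : (v + w) * ((v+w)^3 + s^3) = 0 := by
    have : (v + w)^4 + s^3*(v+w) = 0 := by
      rw [e4]; linear_combination hv + hw - e * h2
    linear_combination this
  rcases mul_eq_zero.1 this with h | h
  · left; linear_combination h - v * h2
  · right
    have : v + w = s := hc _ _ (by linear_combination h - s^3*h2)
    linear_combination this - v * h2

lemma fiber_card {F : Type*} [Field F] [CharP F 2] [DecidableEq F] (t : F) (ht : t ≠ 0)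
    (S : Finset F) (v : F) : (S.filter (fun b => (b*t^3)^2 + b*t^3 = v)).card ≤ 2 := by
  apply card_two_of _ ((t^3)⁻¹)
  intro x hx y hy
  simp only [Finset.mem_filter] at hx hy
  rcases sq_eq_self _ _ (hx.2.trans hy.2.symm) with h | h
  · left; exact mul_right_cancel₀ (pow_ne_zero 3 ht) h
  · right
    have h3 := pow_ne_zero 3 ht
    apply mul_right_cancel₀ h3
    rw [h, add_mul, inv_mul_cancel₀ h3]

lemma ker_card_eight {F : Type*} [Field F] [Fintype F] [DecidableEq F] [CharP F 2]
    (hc : ∀ x y : F, x ^ 3 = y ^ 3 → x = y) (t : F) (ht : t ≠ 0) :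
    (Finset.univ.filter (fun b => PP ((t^3)⁻¹) b = 0)).card ≤ 8 := by
  set V : Finset F := {0, t^7} ∪
    Finset.univ.filter (fun v => v^4 + (t^7)^3 * v + (t^7)^6 = 0) with hV
  have hVc : V.card ≤ 4 := by
    refine (Finset.card_union_le _ _).trans ?_
    have h1 : ({0, t^7} : Finset F).card ≤ 2 := Finset.card_le_two
    have h2 : (Finset.univ.filter (fun v : F => v^4 + (t^7)^3 * v + (t^7)^6 = 0)).card ≤ 2 := by
      apply card_two_of _ (t^7)
      intro x hx y hy
      simp only [Finset.mem_filter] at hx hy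
      exact fourth_eq hc _ _ _ _ hx.2 hy.2
    omega
  have := Finset.card_le_mul_card_image_of_maps_to
    (s := Finset.univ.filter (fun b => PP ((t^3)⁻¹) b = 0)) (t := V)
    (f := fun b => (b*t^3)^2 + b*t^3) (by
      intro b hb
      simp only [Finset.mem_filter] at hb
      have := PP_factor t b ht hb.2 hc
      simpa [hV, or_assoc] using this) 2 (fun v _ => fiber_card t ht _ v)
  omega

lemma ker_card_two {F : Type*} [Field F] [Fintype F] [DecidableEq F] [CharP F 2]
    (T : F →+ ZMod 2) (hT2 : ∀ x, T (x ^ 2) = T x)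
    (hc : ∀ x y : F, x ^ 3 = y ^ 3 → x = y) (t : F) (ht : t ≠ 0) (hT : T (t^7) ≠ 0) :
    (Finset.univ.filter (fun b => PP ((t^3)⁻¹) b = 0)).card ≤ 2 := by
  have hz : ∀ z : ZMod 2, z + z = 0 := by decide
  have := Finset.card_le_mul_card_image_of_maps_to
    (s := Finset.univ.filter (fun b => PP ((t^3)⁻¹) b = 0)) (t := ({0} : Finset F))
    (f := fun b => (b*t^3)^2 + b*t^3) (by
      intro b hb
      simp only [Finset.mem_filter] at hb
      rcases PP_factor t b ht hb.2 hc with h | h | h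
      · simpa using h
      · exfalso; apply hT; rw [← h, map_add, hT2, hz]
      · exfalso; apply hT
        generalize (b*t^3)^2 + b*t^3 = v at h
        set s := t^7 with hs
        have hs0 : s ≠ 0 := pow_ne_zero 7 ht
        obtain ⟨w, rfl⟩ : ∃ w, v = s * w := ⟨v / s, by field_simp⟩
        have h2 : (2 : F) = 0 := CharTwo.two_eq_zero
        have h3 : s^2 = (w^2)^2 + w := by
          apply mul_left_cancel₀ (pow_ne_zero 4 hs0)
          linear_combination h - (s^4*w^4+s^4*w) * h2
        rw [← hT2, h3, map_add, hT2, hT2, hz]) 2 (fun v _ => fiber_card t ht _ v)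
  simpa using this

lemma sum_T {F : Type*} [Field F] [Fintype F] [DecidableEq F]
    (T : F →+ ZMod 2) (hTn : ∀ x, x ≠ 0 → ∃ y, T (x * y) ≠ 0) (z : F) :
    ∑ b, sg (T (b * z)) = if z = 0 then (Fintype.card F : ℝ) else 0 := by
  split_ifs with hz
  · subst hz; simp [sg_zero]
  · obtain ⟨c, hc⟩ := hTn z hz
    apply sum_sg_zero (fun b => T (b * z)) c
    intro x
    have hzz : ∀ z : ZMod 2, z + z = 0 := by decide
    rw [add_mul, map_add, ← add_assoc, hzz, zero_add, mul_comm, z2_ne_zero hc]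

lemma card_seven {F : Type*} [Field F] [Fintype F] [DecidableEq F] (x : F) (hx : x ≠ 0) :
    (Finset.univ.filter (fun y : F => y ^ 7 = x ^ 7)).card =
      (Finset.univ.filter (fun y : F => y ^ 7 = 1)).card := by
  apply Finset.card_nbij' (fun y => y / x) (fun y => y * x)
  · intro y hy
    simp only [Finset.coe_filter, Finset.mem_univ, true_and, Set.mem_ofPred_eq] at *
    rw [div_pow, hy, div_self (pow_ne_zero 7 hx)]
  · intro y hy
    simp only [Finset.coe_filter, Finset.mem_univ, true_and, Set.mem_ofPred_eq] at *
    rw [mul_pow, hy, one_mul]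
  · intro y _; field_simp
  · intro y _; field_simp

lemma card_seven_erase {F : Type*} [Field F] [Fintype F] [DecidableEq F] (x : F) (hx : x ≠ 0) :
    ((Finset.univ.erase 0).filter (fun y : F => y ^ 7 = x ^ 7)).card =
      (Finset.univ.filter (fun y : F => y ^ 7 = 1)).card := by
  rw [← card_seven x hx]
  congr 1
  ext y
  simp only [Finset.mem_filter, Finset.mem_erase, Finset.mem_univ, and_true, true_and,
    and_iff_right_iff_imp]
  rintro h rfl
  exact pow_ne_zero 7 hx (by rw [← h]; simp)

lemma weil_seven {F : Type*} [Field F] [Fintype F] [DecidableEq F] [CharP F 2]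
    (T : F →+ ZMod 2) (hTn : ∀ x, x ≠ 0 → ∃ y, T (x * y) ≠ 0) :
    (∑ x, sg (T (x ^ 7))) ^ 2 ≤ (Fintype.card F : ℝ) *
      (((Finset.univ.filter (fun y : F => y ^ 7 = 1)).card : ℝ) - 1) ^ 2 := by
  set q : ℝ := (Fintype.card F : ℝ) with hq
  set d : ℝ := ((Finset.univ.filter (fun y : F => y ^ 7 = 1)).card : ℝ) with hd
  set E : Finset F := Finset.univ.erase 0 with hE
  set S : F → ℝ := fun b => ∑ x, sg (T (b * x ^ 7)) with hS
  have hq1 : 1 < q := by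
    rw [hq]; exact_mod_cast Fintype.one_lt_card
  have hEc : (E.card : ℝ) = q - 1 := by
    rw [hE, Finset.card_erase_of_mem (Finset.mem_univ _), Finset.card_univ,
      Nat.cast_sub Fintype.card_pos]; simp [hq]
  have hsplit : ∀ g : F → ℝ, ∑ b, g b = g 0 + ∑ b ∈ E, g b := fun g =>
    (Finset.add_sum_erase _ g (Finset.mem_univ 0)).symm
  have hS0 : S 0 = q := by simp [hS, sg_zero, hq]
  have hSS : S 1 = ∑ x, sg (T (x ^ 7)) := by simp [hS]
  have hsum1 : ∑ b ∈ E, S b = 0 := by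
    have h : ∑ b, S b = q := by
      rw [hS, Finset.sum_comm]
      simp only [sum_T T hTn]
      simp [hq]
    rw [hsplit, hS0] at h; linarith
  have hsum2 : ∑ b ∈ E, S b ^ 2 = q * (q - 1) * (d - 1) := by
    have h : ∑ b, S b ^ 2 = q * (1 + (q - 1) * d) := by
      have h1 : ∀ b, S b ^ 2 = ∑ x, ∑ y, sg (T (b * (x ^ 7 + y ^ 7))) := by
        intro b
        rw [sq, hS, Finset.sum_mul_sum]
        simp only [mul_add, map_add, sg_add]
      simp only [h1]
      rw [Finset.sum_comm]
      have h2 : ∀ x : F, ∑ b, ∑ y, sg (T (b * (x ^ 7 + y ^ 7))) =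
          q * ((Finset.univ.filter (fun y : F => y ^ 7 = x ^ 7)).card : ℝ) := by
        intro x
        rw [Finset.sum_comm]
        simp only [sum_T T hTn]
        rw [← Finset.sum_filter]
        simp only [Finset.sum_const, nsmul_eq_mul]
        rw [mul_comm]
        congr 3
        ext y
        simp only [Finset.mem_filter, Finset.mem_univ, true_and]
        rw [CharTwo.add_eq_zero, eq_comm]
      simp only [h2]
      rw [← Finset.mul_sum, hsplit]
      congr 2
      · have : (Finset.univ.filter (fun y : F => y ^ 7 = 0 ^ 7)) = {0} := by
          ext y; simp
        rw [this]; simp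
      · rw [Finset.sum_congr rfl (g := fun _ => d)]
        · simp [hEc]
        · intro x hx
          rw [card_seven x (Finset.ne_of_mem_erase hx)]
    rw [hsplit, hS0] at h; linear_combination h
  set r : F → ℝ := fun b => ((E.filter (fun y => y ^ 7 = b)).card : ℝ) with hr
  have hfib : ∀ g : F → ℝ, ∑ b ∈ E, r b * g b = ∑ y ∈ E, g (y ^ 7) := by
    intro g
    rw [← Finset.sum_fiberwise_of_maps_to (s := E) (t := E) (g := fun y => y ^ 7)
      (f := fun y => g (y ^ 7))]
    · refine Finset.sum_congr rfl fun b _ => ?_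
      rw [Finset.sum_congr rfl (g := fun _ => g b)]
      · simp [hr]
      · intro y hy
        rw [(Finset.mem_filter.1 hy).2]
    · intro y hy
      simp only [hE, Finset.mem_erase, Finset.mem_univ, and_true] at *
      exact pow_ne_zero 7 hy
  have hr1 : ∑ b ∈ E, r b = q - 1 := by
    have := hfib (fun _ => 1)
    simpa [hEc] using this
  have hr2 : ∑ b ∈ E, r b ^ 2 = (q - 1) * d := by
    have := hfib r
    simp only [sq]
    rw [this, Finset.sum_congr rfl (g := fun _ => d)]
    · simp [hEc]
    · intro x hx
      rw [hr, hd]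
      simp only
      rw [card_seven_erase x (Finset.ne_of_mem_erase hx)]
  have hrS : ∑ b ∈ E, (r b - 1) * S b = (q - 1) * S 1 := by
    have hsub : ∀ b, (r b - 1) * S b = r b * S b - S b := fun b => by ring
    simp only [hsub, Finset.sum_sub_distrib]
    rw [hsum1, hfib S, Finset.sum_congr rfl (g := fun _ => S 1)]
    · simp only [Finset.sum_const, nsmul_eq_mul, hEc, sub_zero]
    · intro y hy
      have hy0 := Finset.ne_of_mem_erase hy
      simp only [hS]
      rw [← Equiv.sum_comp (Equiv.mulLeft₀ y hy0) (fun x => sg (T (1 * x ^ 7)))]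
      refine Finset.sum_congr rfl fun x _ => ?_
      simp [mul_pow]
  have hr3 : ∑ b ∈ E, (r b - 1) ^ 2 = (q - 1) * (d - 1) := by
    have : ∀ b, (r b - 1) ^ 2 = r b ^ 2 - 2 * r b + 1 := fun b => by ring
    simp only [this, Finset.sum_add_distrib, Finset.sum_sub_distrib, ← Finset.mul_sum, hr1, hr2]
    simp only [Finset.sum_const, nsmul_eq_mul, hEc]; ring
  have hcs := Finset.sum_mul_sq_le_sq_mul_sq E (fun b => r b - 1) S
  rw [hrS, hr3, hsum2, hSS] at hcs
  have hpos : 0 < (q - 1) ^ 2 := by have := sub_pos.2 hq1; positivity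
  refine le_of_mul_le_mul_left ?_ hpos
  linarith

lemma walsh_bound_s1 {F : Type*} [Field F] [Fintype F] [DecidableEq F] [CharP F 2]
    (T : F →+ ZMod 2) (hT2 : ∀ x, T (x ^ 2) = T x)
    (hTn : ∀ x, x ≠ 0 → ∃ y, T (x * y) ≠ 0)
    (hc : ∀ x y : F, x ^ 3 = y ^ 3 → x = y) (g : F → ZMod 2)
    (hg : ∀ a b c x, ((g x + g (x + a)) + (g (x + b) + g (x + b + a))) +
      ((g (x + c) + g (x + c + a)) + (g (x + c + b) + g (x + c + b + a))) = 0)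
    (R : ℝ) (hR0 : 0 ≤ R) (hR : R ^ 2 = 2 * (Fintype.card F : ℝ)) :
    (∑ x, sg (T (x ^ 7) + g x)) ^ 2 ≤ (Fintype.card F : ℝ) +
      R / 2 * (3 * (Fintype.card F : ℝ) - 4 + ∑ x, sg (T (x ^ 7))) := by
  set q : ℝ := (Fintype.card F : ℝ) with hq
  have hq0 : 0 ≤ q := by positivity
  set h : F → ZMod 2 := fun x => T (x ^ 7) + g x with hh
  have hpt : ∀ t : F, ∑ x, sg (h x + h (x + (t^3)⁻¹)) ≤
      R / 2 * (3 + sg (T (t ^ 7))) + (if t = 0 then q - 2 * R else 0) := by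
    intro t
    split_ifs with ht
    · subst ht
      have := sum_sg_le (fun x => h x + h (x + ((0:F)^3)⁻¹))
      have h0 : T ((0:F) ^ 7) = 0 := by simp
      rw [h0, sg_zero]
      linarith
    · set a := (t^3)⁻¹ with ha
      have hsq := quad_bound (fun x => h x + h (x + a))
        (Finset.univ.filter (fun b => PP a b = 0)) (by
          intro b hb
          simp only [Finset.mem_filter, Finset.mem_univ, true_and] at hb
          obtain ⟨y, hy⟩ := hTn _ hb
          obtain ⟨c, rfl⟩ : ∃ c : F, c ^ 4 = y := by
            have hinj : Function.Injective (fun c : F => c ^ 4) := by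
              intro u v huv
              have h1 : (u ^ 2 + v ^ 2) ^ 2 = 0 := by
                rw [CharTwo.add_sq, CharTwo.add_eq_zero]
                simp only at huv
                linear_combination huv
              have h2 := pow_eq_zero_iff (two_ne_zero) |>.1 h1
              rw [← CharTwo.add_sq] at h2
              exact CharTwo.add_eq_zero.1 (pow_eq_zero_iff (two_ne_zero) |>.1 h2)
            exact (Finite.injective_iff_surjective.1 hinj) y
          refine ⟨c, fun x => ?_⟩
          have e1 := third_der T hT2 a b c x
          rw [z2_ne_zero hy] at e1
          have e2 := hg a b c x
          simp only [hh]
          linear_combination e1 + e2)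
      rw [add_zero]
      by_cases hT : T (t ^ 7) = 0
      · have hcard : ((Finset.univ.filter (fun b => PP a b = 0)).card : ℝ) ≤ 8 := by
          exact_mod_cast ker_card_eight hc t ht
        rw [hT, sg_zero]
        refine le_of_abs_le (abs_le_of_sq_le_sq ?_ (by positivity))
        nlinarith [mul_le_mul_of_nonneg_right hcard hq0]
      · have hcard : ((Finset.univ.filter (fun b => PP a b = 0)).card : ℝ) ≤ 2 := by
          exact_mod_cast ker_card_two T hT2 hc t ht hT
        rw [z2_ne_zero hT, sg_one]
        refine le_of_abs_le (abs_le_of_sq_le_sq ?_ (by linarith))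
        nlinarith [mul_le_mul_of_nonneg_right hcard hq0]
  have hbij : Function.Bijective (fun t : F => (t^3)⁻¹) := by
    apply Finite.injective_iff_bijective.1
    intro x y hxy
    exact hc _ _ (inv_injective hxy)
  rw [sq_sum_sg, ← hbij.sum_comp (fun a => ∑ x, sg (h x + h (x + a)))]
  refine (Finset.sum_le_sum fun t _ => hpt t).trans (le_of_eq ?_)
  rw [Finset.sum_add_distrib, ← Finset.mul_sum, Finset.sum_add_distrib]
  simp only [Finset.sum_const, nsmul_eq_mul, Finset.sum_ite_eq', Finset.mem_univ, if_true,
    Finset.card_univ, ← hq]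
  ring

lemma pow_inj_of_coprime {F : Type*} [Field F] [Fintype F] (k : ℕ) (hk : k ≠ 0)
    (hcop : Nat.Coprime k (Fintype.card F - 1)) (x y : F) (h : x ^ k = y ^ k) : x = y := by
  by_cases hy : y = 0
  · subst hy
    rw [zero_pow hk] at h
    exact pow_eq_zero_iff hk |>.1 h
  · have hx : x ≠ 0 := by
      rintro rfl
      rw [zero_pow hk] at h
      exact pow_ne_zero k hy h.symm
    have h1 : (x / y) ^ k = 1 := by rw [div_pow, h, div_self (pow_ne_zero k hy)]
    have h2 := FiniteField.pow_card_sub_one_eq_one (x / y) (div_ne_zero hx hy)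
    have h3 : (x / y) ^ (Nat.gcd k (Fintype.card F - 1)) = 1 := pow_gcd_eq_one.2 ⟨h1, h2⟩
    rw [hcop, pow_one] at h3
    exact (div_eq_one_iff_eq hy).1 h3

lemma coprime_three (n : ℕ) (hodd : Odd n) : Nat.Coprime 3 (2 ^ n - 1) := by
  rw [Nat.Prime.coprime_iff_not_dvd Nat.prime_three]
  obtain ⟨m, rfl⟩ := hodd
  have h : 2 ^ (2 * m + 1) % 3 = 2 := by
    rw [pow_succ, pow_mul, Nat.mul_mod, Nat.pow_mod]; simp
  have h1 : 1 ≤ 2 ^ (2 * m + 1) := Nat.one_le_two_pow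
  generalize 2 ^ (2 * m + 1) = N at *
  omega

lemma coprime_seven (n : ℕ) (h3 : ¬ 3 ∣ n) : Nat.Coprime 7 (2 ^ n - 1) := by
  rw [Nat.Prime.coprime_iff_not_dvd (by norm_num)]
  have h : 2 ^ n % 7 = 2 ^ (n % 3) % 7 := by
    conv_lhs => rw [← Nat.div_add_mod n 3]
    rw [pow_add, pow_mul, Nat.mul_mod, Nat.pow_mod]; simp
  have h1 : 1 ≤ 2 ^ n := Nat.one_le_two_pow
  generalize 2 ^ n = N at *
  have : n % 3 = 1 ∨ n % 3 = 2 := by omega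
  rcases this with hh | hh <;> rw [hh] at h <;> norm_num at h <;> omega

lemma card_roots_le {F : Type*} [Field F] [Fintype F] [DecidableEq F] :
    (Finset.univ.filter (fun y : F => y ^ 7 = 1)).card ≤ 7 := by
  have h1 : (Finset.univ.filter (fun y : F => y ^ 7 = 1)) ⊆
      (Polynomial.nthRoots 7 (1 : F)).toFinset := by
    intro y hy
    simp only [Finset.mem_filter, Finset.mem_univ, true_and] at hy
    simpa using hy
  exact (Finset.card_le_card h1).trans
    ((Multiset.toFinset_card_le _).trans (Polynomial.card_nthRoots _ _))

lemma one_le_card_roots {F : Type*} [Field F] [Fintype F] [DecidableEq F] :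
    1 ≤ (Finset.univ.filter (fun y : F => y ^ 7 = 1)).card :=
  Finset.card_pos.2 ⟨1, by simp⟩

lemma sum_sg_dist {F : Type*} [Fintype F] (f g : F → ZMod 2) :
    ∑ x, sg (f x + g x) = (Fintype.card F : ℝ) - 2 * ({x : F | f x ≠ g x}.ncard : ℝ) := by
  classical
  have h : ∀ x, sg (f x + g x) = 1 - 2 * (if f x ≠ g x then 1 else 0) := by
    intro x
    have : f x + g x = 0 ↔ f x = g x := by
      generalize f x = u
      generalize g x = v
      revert u v; decide
    unfold sg
    by_cases h : f x = g x
    · rw [if_pos (this.2 h)]; simp [h]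
    · simp [this, h]; norm_num
  simp only [h, Finset.sum_sub_distrib, ← Finset.mul_sum]
  rw [Finset.sum_boole, Set.ncard_eq_toFinset_card']
  simp

lemma tr_sq {n : ℕ} (x : Fq n) : tr (x ^ 2) = tr x := by
  have h := Algebra.trace_eq_of_algEquiv
    (FiniteField.frobeniusAlgEquivOfAlgebraic (ZMod 2) (Fq n)) x
  rw [FiniteField.coe_frobeniusAlgEquivOfAlgebraic] at h
  simpa [tr] using h

lemma tr_nondeg {n : ℕ} (x : Fq n) (hx : x ≠ 0) : ∃ y, tr (x * y) ≠ 0 := by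
  have htr := (traceForm_nondegenerate (ZMod 2) (Fq n)).1 x
  simp_rw [Algebra.traceForm_apply] at htr
  by_contra! hf
  exact hx (htr hf)

/-- The trace as an additive homomorphism. -/
def trHom (n : ℕ) : Fq n →+ ZMod 2 := (Algebra.trace (ZMod 2) (Fq n)).toAddMonoidHom

lemma trHom_apply {n : ℕ} (x : Fq n) : trHom n x = tr x := rfl

lemma derIter_zero {n : ℕ} (l : List (Fq n)) :
    derIter (fun _ : Fq n => (0 : ZMod 2)) l = fun _ => 0 := by
  induction l with
  | nil => rfl
  | cons a l ih => simp only [derIter, ih]; funext x; simp [der]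

lemma nl_attained {n : ℕ} (f : Fq n → ZMod 2) :
    ∃ g : Fq n → ZMod 2, degLE g 2 ∧ nl 2 f = hdist f g := by
  have hne : {d : ℕ | ∃ g : Fq n → ZMod 2, degLE g 2 ∧ d = hdist f g}.Nonempty :=
    ⟨_, fun _ => 0, fun l _ => derIter_zero l, rfl⟩
  exact Nat.sInf_mem hne

lemma nl_main (n : ℕ) (hn : 0 < n) (hodd : Odd n)
    (f : Fq n → ZMod 2) (hf : ∀ x, f x = tr (x ^ 7)) (R : ℝ) (hR0 : 0 ≤ R)
    (hR : R ^ 2 = 2 * (2:ℝ) ^ n) :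
    ∃ S : ℝ, (¬ (3 ∣ n) → S = 0) ∧ S ^ 2 ≤ 36 * (2:ℝ) ^ n ∧
      ((2:ℝ) ^ n - 2 * (nl 2 f : ℝ)) ^ 2 ≤ (2:ℝ) ^ n + R / 2 * (3 * (2:ℝ) ^ n - 4 + S) := by
  classical
  letI : Fintype (Fq n) := Fintype.ofFinite _
  have hcard : Fintype.card (Fq n) = 2 ^ n := by
    rw [← Nat.card_eq_fintype_card]; exact GaloisField.card 2 n hn.ne'
  have hcardR : (Fintype.card (Fq n) : ℝ) = (2:ℝ) ^ n := by rw [hcard]; simp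
  have hc : ∀ x y : Fq n, x ^ 3 = y ^ 3 → x = y :=
    pow_inj_of_coprime 3 (by norm_num) (by rw [hcard]; exact coprime_three n hodd)
  obtain ⟨g, hg, hd⟩ := nl_attained f
  have hg3 : ∀ a b c x : Fq n, ((g x + g (x + a)) + (g (x + b) + g (x + b + a))) +
      ((g (x + c) + g (x + c + a)) + (g (x + c + b) + g (x + c + b + a))) = 0 :=
    fun a b c x => congrFun (hg [c, b, a] rfl) x
  have hW := walsh_bound_s1 (trHom n) (fun x => tr_sq x) (fun x hx => tr_nondeg x hx) hc g hg3 R hR0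
    (by rw [hcardR, hR])
  have hWe := weil_seven (trHom n) (fun x hx => tr_nondeg x hx)
  have hfg : ∑ x, sg (trHom n (x ^ 7) + g x) = (2:ℝ) ^ n - 2 * (nl 2 f : ℝ) := by
    rw [hd, hdist, ← hcardR, ← sum_sg_dist]
    simp only [hf, trHom_apply]
  rw [hfg, hcardR] at hW
  rw [hcardR] at hWe
  refine ⟨_, ?_, ?_, hW⟩
  · intro h3
    have h7 : (Finset.univ.filter (fun y : Fq n => y ^ 7 = 1)) = {1} := by
      ext y
      simp only [Finset.mem_filter, Finset.mem_univ, true_and, Finset.mem_singleton]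
      constructor
      · intro h
        exact pow_inj_of_coprime 7 (by norm_num) (by rw [hcard]; exact coprime_seven n h3) y 1
          (by rw [h, one_pow])
      · rintro rfl; simp
    rw [h7] at hWe
    simp only [Finset.card_singleton, Nat.cast_one, sub_self, ne_eq, OfNat.ofNat_ne_zero,
      not_false_eq_true, zero_pow, mul_zero] at hWe
    exact pow_eq_zero_iff two_ne_zero |>.1 (le_antisymm hWe (sq_nonneg _))
  · refine hWe.trans ?_
    have h1 : (1:ℝ) ≤ ((Finset.univ.filter (fun y : Fq n => y ^ 7 = 1)).card : ℝ) := by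
      exact_mod_cast one_le_card_roots (F := Fq n)
    have h2 : ((Finset.univ.filter (fun y : Fq n => y ^ 7 = 1)).card : ℝ) ≤ 7 := by
      exact_mod_cast card_roots_le (F := Fq n)
    have h3 : (0:ℝ) < 2 ^ n := by positivity
    rw [mul_comm]
    apply mul_le_mul_of_nonneg_right _ h3.le
    nlinarith

/-- Second-order nonlinearity lower bound for `tr(x^7)`, odd `n`. -/
theorem second_order_nl_tr_x7_odd (n : ℕ) (hn : 0 < n) (hodd : Odd n)
    (f : Fq n → ZMod 2) (hf : ∀ x, f x = tr (x ^ 7)) :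
    (¬ (3 ∣ n) →
      (nl 2 f : ℝ) ≥ (2:ℝ) ^ ((n:ℝ) - 1) - (1/2) * Real.sqrt
        (3 * (2:ℝ) ^ ((3 * (n:ℝ) - 1) / 2) + (2:ℝ) ^ (n:ℝ)
          - (2:ℝ) ^ (((n:ℝ) + 3) / 2))) ∧
    ((3 ∣ n) →
      (nl 2 f : ℝ) ≥ (2:ℝ) ^ ((n:ℝ) - 1) - (1/2) * Real.sqrt
        (3 * (2:ℝ) ^ ((3 * (n:ℝ) - 1) / 2) + (2:ℝ) ^ (n:ℝ)
          + 3 * (2:ℝ) ^ ((n:ℝ) + 1/2) - (2:ℝ) ^ (((n:ℝ) + 3) / 2))) := by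
  obtain ⟨m, hm⟩ := hodd
  have hnm : (n : ℝ) = 2 * m + 1 := by rw [hm]; push_cast; ring
  have hR : ((2:ℝ) ^ (m + 1)) ^ 2 = 2 * (2:ℝ) ^ n := by rw [hm]; ring
  obtain ⟨S, hS0, hS1, hS⟩ := nl_main n hn ⟨m, hm⟩ f hf ((2:ℝ) ^ (m + 1)) (by positivity) hR
  have e1 : (2:ℝ) ^ ((n:ℝ) - 1) = (2:ℝ) ^ n / 2 := by
    rw [Real.rpow_sub_one (by norm_num), Real.rpow_natCast]
  have e2 : (2:ℝ) ^ ((3 * (n:ℝ) - 1) / 2) = (2:ℝ) ^ (m + 1) / 2 * (2:ℝ) ^ n := by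
    rw [show (3 * (n:ℝ) - 1) / 2 = ((3 * m + 1 : ℕ) : ℝ) by rw [hnm]; push_cast; ring,
      Real.rpow_natCast, hm]
    ring
  have e3 : (2:ℝ) ^ (((n:ℝ) + 3) / 2) = 2 * (2:ℝ) ^ (m + 1) := by
    rw [show ((n:ℝ) + 3) / 2 = ((m + 2 : ℕ) : ℝ) by rw [hnm]; push_cast; ring,
      Real.rpow_natCast]
    ring
  have e4 : ((2:ℝ) ^ ((n:ℝ) + 1/2)) ^ 2 = 2 * ((2:ℝ) ^ n) ^ 2 := by
    rw [← Real.rpow_natCast, ← Real.rpow_mul (by norm_num),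
      show ((n:ℝ) + 1/2) * ((2:ℕ):ℝ) = ((2 * n + 1 : ℕ) : ℝ) by push_cast; ring,
      Real.rpow_natCast]
    ring
  have e5 : 0 < (2:ℝ) ^ ((n:ℝ) + 1/2) := by positivity
  rw [e1, e2, e3, Real.rpow_natCast]
  generalize (2:ℝ) ^ ((n:ℝ) + 1/2) = X at *
  have key : ∀ Y : ℝ, ((2:ℝ) ^ n - 2 * (nl 2 f : ℝ)) ^ 2 ≤ Y →
      (nl 2 f : ℝ) ≥ (2:ℝ) ^ n / 2 - 1/2 * Real.sqrt Y := by
    intro Y hY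
    have := (le_abs_self _).trans (Real.abs_le_sqrt hY)
    linarith
  constructor
  · intro h3
    apply key
    rw [hS0 h3] at hS
    refine hS.trans (le_of_eq ?_)
    ring
  · intro _
    apply key
    refine hS.trans ?_
    have hq : (0:ℝ) < (2:ℝ) ^ n := by positivity
    generalize (2:ℝ) ^ (m + 1) = R at *
    generalize (2:ℝ) ^ n = q at *
    have h : R / 2 * S ≤ 3 * X := by
      refine le_of_abs_le (abs_le_of_sq_le_sq ?_ (by positivity))
      have : (R / 2 * S) ^ 2 = q / 2 * S ^ 2 := by
        rw [mul_pow, div_pow, hR]; ring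
      rw [this, mul_pow, e4]
      nlinarith
    linarith
end
end

section
/- Let r be a positive integer, let n = 2r, and let f : F → 𝔽₂ be defined by f(x) = tr(x^{2^r + 3}). If r is odd, then nl₂(f) ≥ 2^{n−1} − (1/2)·√(2^{3n/2 + 1} + 2^{5n/4 + 1/2} − 2^n − 2^{3n/4 + 1/2}); if r is even, then nl₂(f) ≥ 2^{n−1} − (1/2)·√(2^{3n/2 + 1} + (1/3)·2^{5n/4 + 2} − 2^n − (1/3)·2^{3n/4 + 2}). -/
noncomputable section

section NLHelpers

open Finset

set_option linter.unusedSectionVars false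

variable {F : Type*} [Field F] [Fintype F] [DecidableEq F] [CharP F 2] [Algebra (ZMod 2) F]

/-- The sign character of `𝔽₂`. -/
def sgn (z : ZMod 2) : ℤ := if z = 0 then 1 else -1

theorem sgn_add (a b : ZMod 2) : sgn (a + b) = sgn a * sgn b := by
  revert a b; decide

theorem sgn_le (a : ZMod 2) : sgn a ≤ 1 := by
  revert a; decide

theorem le_of_sq_le_sq_aux {x y : ℤ} (hy : 0 ≤ y) (h : x ^ 2 ≤ y ^ 2) : x ≤ y :=
  le_of_abs_le (abs_le_of_sq_le_sq h hy)

theorem sum_sgn_sq (h : F → ZMod 2) :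
    (∑ x, sgn (h x)) ^ 2 = ∑ a, ∑ x, sgn (h x + h (x + a)) := by
  rw [sq, Finset.sum_mul_sum, Finset.sum_comm (f := fun a x => sgn (h x + h (x + a)))]
  refine Finset.sum_congr rfl fun x _ => ?_
  rw [← Equiv.sum_comp (Equiv.addLeft x)]
  simp [sgn_add]

theorem trace_sq (x : F) : Algebra.trace (ZMod 2) F (x ^ 2) = Algebra.trace (ZMod 2) F x := by
  have := Algebra.trace_eq_of_algEquiv (FiniteField.frobeniusAlgEquiv (ZMod 2) F 2) x
  simpa using this

theorem trace_two_pow (r : ℕ) (x : F) :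
    Algebra.trace (ZMod 2) F (x ^ (2 ^ r)) = Algebra.trace (ZMod 2) F x := by
  induction r with
  | zero => simp
  | succ k ih => rw [pow_succ, pow_mul, trace_sq, ih]

theorem exists_trace_mul_sq {c : F} (hc : c ≠ 0) :
    ∃ x : F, Algebra.trace (ZMod 2) F (c * x ^ 2) = 1 := by
  have h0 : Algebra.trace (ZMod 2) F ≠ 0 := Algebra.trace_ne_zero (ZMod 2) F
  obtain ⟨y, hy⟩ : ∃ y, Algebra.trace (ZMod 2) F y ≠ 0 := by
    by_contra! hh
    exact h0 (LinearMap.ext hh)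
  obtain ⟨x, hx⟩ : ∃ x : F, x ^ 2 = y / c := by
    obtain ⟨x, hx⟩ := (FiniteField.frobeniusAlgEquiv (ZMod 2) F 2).surjective (y / c)
    exact ⟨x, by simpa using hx⟩
  refine ⟨x, ?_⟩
  rw [hx, mul_div_cancel₀ _ hc]
  generalize Algebra.trace (ZMod 2) F y = z at hy
  revert z; decide

theorem sum_sgn_zero {c : F} (hc : c ≠ 0) (e : ZMod 2) :
    ∑ x : F, sgn (Algebra.trace (ZMod 2) F (c * x ^ 2) + e) = 0 := by
  obtain ⟨y, hy⟩ := exists_trace_mul_sq hc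
  have h : ∑ x : F, sgn (Algebra.trace (ZMod 2) F (c * x ^ 2) + e)
      = ∑ x : F, - sgn (Algebra.trace (ZMod 2) F (c * x ^ 2) + e) := by
    rw [← Equiv.sum_comp (Equiv.addLeft y)]
    refine Finset.sum_congr rfl fun x _ => ?_
    have : c * (Equiv.addLeft y x) ^ 2 = c * y ^ 2 + c * x ^ 2 := by
      simp [add_pow_char, mul_add]
    rw [this, map_add, hy, add_assoc, sgn_add]
    simp [show sgn 1 = -1 from rfl]
  rw [Finset.sum_neg_distrib] at h
  linarith

/-- The linear form describing the second derivative. -/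
def LL (q : ℕ) (a b : F) : F :=
  (a ^ q * b + a * b ^ q) + ((a ^ 2 * b + a * b ^ 2) ^ q) ^ 2 + (a ^ q * b ^ 2 + a ^ 2 * b ^ q) ^ 2

theorem second_der (r q : ℕ) (hq : q = 2 ^ r) (hF : ∀ x : F, (x ^ q) ^ q = x) (a b x : F) :
    Algebra.trace (ZMod 2) F (x ^ (q + 3)) + Algebra.trace (ZMod 2) F ((x + a) ^ (q + 3))
      + (Algebra.trace (ZMod 2) F ((x + b) ^ (q + 3))
        + Algebra.trace (ZMod 2) F ((x + b + a) ^ (q + 3)))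
    = Algebra.trace (ZMod 2) F (LL q a b * x ^ 2)
      + (Algebra.trace (ZMod 2) F (a ^ (q + 3)) + Algebra.trace (ZMod 2) F (b ^ (q + 3))
        + Algebra.trace (ZMod 2) F ((b + a) ^ (q + 3))) := by
  have hadd : ∀ u v : F, (u + v) ^ q = u ^ q + v ^ q := fun u v => by
    rw [hq]; exact add_pow_char_pow u v 2 r
  have h2 : (2 : F) = 0 := CharTwo.two_eq_zero
  have htq : ∀ u : F, Algebra.trace (ZMod 2) F (u ^ q) = Algebra.trace (ZMod 2) F u := fun u => by
    rw [hq]; exact trace_two_pow r u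
  have e1 : Algebra.trace (ZMod 2) F (LL q a b * x ^ 2) = Algebra.trace (ZMod 2) F
      ((a ^ q * b + a * b ^ q) * x ^ 2 + (a ^ 2 * b + a * b ^ 2) * x ^ q
        + (a ^ q * b ^ 2 + a ^ 2 * b ^ q) * x) := by
    rw [map_add, map_add]
    rw [← htq ((a ^ 2 * b + a * b ^ 2) * x ^ q), mul_pow, hF x]
    rw [← trace_sq ((a ^ 2 * b + a * b ^ 2) ^ q * x)]
    rw [← trace_sq ((a ^ q * b ^ 2 + a ^ 2 * b ^ q) * x)]
    rw [← map_add, ← map_add]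
    congr 1
    unfold LL; ring
  rw [e1]
  simp only [← map_add]
  congr 1
  simp only [pow_add _ q 3, hadd]
  generalize a ^ q = A
  generalize b ^ q = B
  generalize x ^ q = X
  grind

theorem card_fib (q : ℕ) (hq : 2 ≤ q) (t : F) : #{b : F | b ^ q + b = t} ≤ q := by
  classical
  let p : Polynomial F := Polynomial.X ^ q + (Polynomial.X - Polynomial.C t)
  have hd : p.degree = q := by
    have : (Polynomial.X - Polynomial.C t : Polynomial F).degree < ((Polynomial.X : Polynomial F) ^ q).degree := by
      rw [Polynomial.degree_X_sub_C, Polynomial.degree_X_pow]; exact_mod_cast hq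
    rw [Polynomial.degree_add_eq_left_of_degree_lt this, Polynomial.degree_X_pow]
  have hp : p ≠ 0 := by
    intro h; rw [h] at hd; simp at hd
  have hn : p.natDegree = q := Polynomial.natDegree_eq_of_degree_eq_some hd
  calc _ ≤ #p.roots.toFinset := by
        apply Finset.card_le_card
        intro b hb
        simp only [Finset.mem_filter, Finset.mem_univ, true_and] at hb
        rw [Multiset.mem_toFinset, Polynomial.mem_roots hp]
        simp [p, ← hb]
    _ ≤ p.roots.card := Multiset.toFinset_card_le _
    _ ≤ p.natDegree := p.card_roots'
    _ = q := hn

theorem card_fixed (q : ℕ) (hq : 2 ≤ q) (hadd : ∀ u v : F, (u + v) ^ q = u ^ q + v ^ q)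
    (hF : ∀ x : F, (x ^ q) ^ q = x) (hc : Fintype.card F = q ^ 2) :
    #{b : F | b ^ q = b} = q := by
  have hset : (Finset.univ.filter fun b : F => b ^ q = b) = (Finset.univ.filter fun b : F => b ^ q + b = 0) := by
    ext b; simp [CharTwo.add_eq_zero]
  apply le_antisymm
  · rw [hset]; exact card_fib q hq 0
  · have := Finset.card_le_mul_card_image_of_maps_to (s := (univ : Finset F))
      (t := ({b : F | b ^ q = b} : Finset F)) (f := fun b => b ^ q + b)
      (by intro b _; simp [hadd, hF, add_comm]) q
      (by intro t _; simpa using card_fib q hq t)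
    rw [Finset.card_univ, hc] at this
    nlinarith

theorem card_ker_le (q : ℕ) (hq : 2 ≤ q) (a : F) (T : Finset F)
    (hT : ∀ b, LL q a b = 0 → b ^ q + b ∈ T) : #{b : F | LL q a b = 0} ≤ q * #T := by
  refine Finset.card_le_mul_card_image_of_maps_to (f := fun b => b ^ q + b) ?_ q ?_
  · intro b hb
    exact hT b (by simpa using hb)
  · intro t _
    refine le_trans (Finset.card_le_card ?_) (card_fib q hq t)
    intro b; simp

theorem ker_generic (q : ℕ) (hadd : ∀ u v : F, (u + v) ^ q = u ^ q + v ^ q)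
    (hF : ∀ x : F, (x ^ q) ^ q = x) (a : F) (ha : a ^ q ≠ a) :
    #{b : F | LL q a b = 0} ≤ 4 := by
  have h2 : (2 : F) = 0 := CharTwo.two_eq_zero
  have hτ : a ^ q + a ≠ 0 := fun h => ha (CharTwo.add_eq_zero.1 h)
  have key0 : ∀ b : F, LL q a b = 0 → b ^ q = b → b = 0 ∨ b = ((a ^ q + a) ^ 3)⁻¹ := by
    intro b hb hbq
    unfold LL at hb
    rw [hadd, mul_pow, mul_pow, pow_right_comm a 2 q, pow_right_comm b 2 q, hbq] at hb
    by_cases h0 : b = 0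
    · exact Or.inl h0
    right
    have : (a ^ q + a) * b * (b * (a ^ q + a) ^ 3 - 1) = 0 := by
      generalize a ^ q = A at *
      grind
    have h3 := (mul_eq_zero.1 this).resolve_left (mul_ne_zero hτ h0)
    exact eq_inv_of_mul_eq_one_left (sub_eq_zero.1 h3)
  have key1 : ∀ b : F, LL q a b = 0 → b ^ q = b ∨ (b + a) ^ q = b + a := by
    intro b hb
    have hb' : (LL q a b) ^ q = 0 := by
      rw [hb]; apply zero_pow; rintro rfl
      have := hadd 0 0; simp at this
    unfold LL at hb hb'
    simp only [hadd, mul_pow, hF, pow_right_comm _ 2 q] at hb hb'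
    rw [hadd]
    generalize a ^ q = A at *
    generalize b ^ q = B at *
    have : ((A + a) * (B + b) * (B + b + (A + a))) ^ 2 = 0 := by grind
    have h3 := pow_eq_zero_iff (two_ne_zero) |>.1 this
    rcases mul_eq_zero.1 h3 with h4 | h4
    · exact Or.inl (CharTwo.add_eq_zero.1 ((mul_eq_zero.1 h4).resolve_left hτ))
    · right; apply CharTwo.add_eq_zero.1; rw [← h4]; ring
  have hadda : ∀ b : F, LL q a (b + a) = LL q a b := by
    intro b
    unfold LL
    simp only [hadd, mul_pow, pow_right_comm _ 2 q]
    generalize a ^ q = A at *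
    generalize b ^ q = B at *
    grind
  refine le_trans (Finset.card_le_card (t := {0, ((a ^ q + a) ^ 3)⁻¹, a, ((a ^ q + a) ^ 3)⁻¹ + a}) ?_)
    Finset.card_le_four
  intro b hb
  simp only [Finset.mem_filter, Finset.mem_univ, true_and] at hb
  simp only [Finset.mem_insert, Finset.mem_singleton]
  rcases key1 b hb with h | h
  · rcases key0 b hb h with h | h <;> simp [h]
  · rcases key0 (b + a) (by rw [hadda, hb]) h with h | h
    · rw [CharTwo.add_eq_zero.1 h]; simp
    · right; right; right
      rw [← h, add_assoc, CharTwo.add_self_eq_zero, add_zero]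

theorem ker_fixed (q : ℕ) (hadd : ∀ u v : F, (u + v) ^ q = u ^ q + v ^ q)
    (a : F) (ha : a ^ q = a) (ha0 : a ≠ 0) (b : F) (hb : LL q a b = 0) :
    b ^ q + b = 0 ∨ a * (b ^ q + b) ^ 3 = 1 := by
  have h2 : (2 : F) = 0 := CharTwo.two_eq_zero
  unfold LL at hb
  simp only [hadd, mul_pow, pow_right_comm _ 2 q, ha] at hb
  generalize b ^ q = B at *
  have : a * (B + b) * (a * (B + b) ^ 3 - 1) = 0 := by grind
  rcases mul_eq_zero.1 this with h | h
  · exact Or.inl ((mul_eq_zero.1 h).resolve_left ha0)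
  · exact Or.inr (sub_eq_zero.1 h)

theorem S_sq_le (r q : ℕ) (hq : q = 2 ^ r) (hF : ∀ x : F, (x ^ q) ^ q = x)
    (hc : Fintype.card F = q ^ 2) (g : F → ZMod 2) (e : F → F → ZMod 2)
    (hg : ∀ a b x, g x + g (x + a) + (g (x + b) + g (x + b + a)) = e a b)
    (h : F → ZMod 2) (hh : ∀ x, h x = Algebra.trace (ZMod 2) F (x ^ (q + 3)) + g x) (a : F) :
    (∑ x, sgn (h x + h (x + a))) ^ 2 ≤ (q : ℤ) ^ 2 * #{b : F | LL q a b = 0} := by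
  rw [sum_sgn_sq (fun x => h x + h (x + a)), mul_comm, ← nsmul_eq_mul, ← Finset.sum_const,
    Finset.sum_filter]
  refine Finset.sum_le_sum fun b _ => ?_
  split_ifs with hb
  · calc _ ≤ ∑ x : F, (1 : ℤ) := Finset.sum_le_sum fun x _ => sgn_le _
      _ = _ := by simp [hc]
  · apply le_of_eq
    rw [← sum_sgn_zero hb ((Algebra.trace (ZMod 2) F (a ^ (q + 3))
      + Algebra.trace (ZMod 2) F (b ^ (q + 3))
        + Algebra.trace (ZMod 2) F ((b + a) ^ (q + 3))) + e a b)]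
    refine Finset.sum_congr rfl fun x _ => ?_
    congr 1
    rw [← add_assoc (Algebra.trace (ZMod 2) F (LL q a b * x ^ 2)), ← second_der r q hq hF a b x, ← hg a b x]
    simp only [hh]
    ring

theorem sum_total (q : ℕ) (hq : 2 ≤ q) (hfix : #{b : F | b ^ q = b} = q)
    (hc : Fintype.card F = q ^ 2) (S : F → ℤ) (M : ℤ) (h0 : S 0 ≤ (q : ℤ) ^ 2)
    (h1 : ∀ a, a ^ q ≠ a → S a ≤ 2 * q)
    (h2 : ∑ a ∈ (univ.filter fun a : F => a ^ q = a).erase 0, S a ≤ M) :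
    ∑ a, S a ≤ (q : ℤ) ^ 2 + M + ((q : ℤ) ^ 2 - q) * (2 * q) := by
  rw [← Finset.sum_filter_add_sum_filter_not univ (fun a : F => a ^ q = a)]
  have hm : (0 : F) ∈ (univ.filter fun a : F => a ^ q = a) := by
    simp; omega
  rw [← Finset.add_sum_erase _ _ hm]
  have hcard : (#{a : F | ¬ a ^ q = a} : ℤ) = (q : ℤ) ^ 2 - q := by
    have := Finset.card_filter_add_card_filter_not (s := (univ : Finset F)) (fun a : F => a ^ q = a)
    rw [hfix, Finset.card_univ, hc] at this
    have h' : ((q + #{a : F | ¬ a ^ q = a} : ℕ) : ℤ) = ((q ^ 2 : ℕ) : ℤ) := by rw [this]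
    push_cast at h'
    linarith
  have h3 : ∑ a ∈ univ.filter (fun a : F => ¬ a ^ q = a), S a ≤ ((q : ℤ) ^ 2 - q) * (2 * q) := by
    rw [← hcard, ← nsmul_eq_mul]
    exact Finset.sum_le_card_nsmul _ _ _ fun a ha => h1 a (by simpa using ha)
  linarith

theorem hadd_of (r q : ℕ) (hq : q = 2 ^ r) (u v : F) : (u + v) ^ q = u ^ q + v ^ q := by
  rw [hq]; exact add_pow_char_pow u v 2 r

theorem fixed_pow (q : ℕ) (hq : 2 ≤ q) {t : F} (ht : t ≠ 0) (h : t ^ q = t) :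
    t ^ (q - 1) = 1 := by
  have : t * t ^ (q - 1) = t * 1 := by
    rw [← pow_succ', Nat.sub_add_cancel (by omega), h, mul_one]
  exact mul_left_cancel₀ ht this

theorem core_general (r q : ℕ) (hr : 0 < r) (hq : q = 2 ^ r)
    (hc : Fintype.card F = q ^ 2) (g : F → ZMod 2) (e : F → F → ZMod 2)
    (hg : ∀ a b x, g x + g (x + a) + (g (x + b) + g (x + b + a)) = e a b)
    (h : F → ZMod 2) (hh : ∀ x, h x = Algebra.trace (ZMod 2) F (x ^ (q + 3)) + g x) (M : ℤ)
    (h2 : ∑ a ∈ (univ.filter fun a : F => a ^ q = a).erase 0,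
      (∑ x, sgn (h x + h (x + a))) ≤ M) :
    (∑ x, sgn (h x)) ^ 2 ≤ (q : ℤ) ^ 2 + M + ((q : ℤ) ^ 2 - q) * (2 * q) := by
  have hF : ∀ x : F, (x ^ q) ^ q = x := fun x => by
    rw [← pow_mul, ← sq, ← hc, FiniteField.pow_card]
  have hq2 : 2 ≤ q := by
    rw [hq]; exact Nat.le_self_pow hr.ne' 2
  have hadd := hadd_of (F := F) r q hq
  rw [sum_sgn_sq]
  refine sum_total q hq2 (card_fixed q hq2 hadd hF hc) hc _ M ?_ ?_ h2
  · calc _ ≤ ∑ x : F, (1 : ℤ) := Finset.sum_le_sum fun x _ => sgn_le _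
      _ = _ := by simp [hc]
  · intro a ha
    apply le_of_sq_le_sq_aux (by positivity)
    refine (S_sq_le r q hq hF hc g e hg h hh a).trans ?_
    have := ker_generic q hadd hF a ha
    have : (#{b : F | LL q a b = 0} : ℤ) ≤ 4 := by exact_mod_cast this
    nlinarith [sq_nonneg (q : ℤ)]

theorem core_odd (s r q : ℕ) (hrs : r = 2 * s + 1) (hq : q = 2 ^ r)
    (hc : Fintype.card F = q ^ 2) (g : F → ZMod 2) (e : F → F → ZMod 2)
    (hg : ∀ a b x, g x + g (x + a) + (g (x + b) + g (x + b + a)) = e a b)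
    (h : F → ZMod 2) (hh : ∀ x, h x = Algebra.trace (ZMod 2) F (x ^ (q + 3)) + g x) :
    (∑ x, sgn (h x)) ^ 2 ≤ (q : ℤ) ^ 2 + ((q : ℤ) - 1) * 2 ^ (3 * s + 2)
      + ((q : ℤ) ^ 2 - q) * (2 * q) := by
  have hF : ∀ x : F, (x ^ q) ^ q = x := fun x => by
    rw [← pow_mul, ← sq, ← hc, FiniteField.pow_card]
  have hq2 : 2 ≤ q := by
    rw [hq]; exact Nat.le_self_pow (by omega) 2
  have hadd := hadd_of (F := F) r q hq
  refine core_general r q (by omega) hq hc g e hg h hh _ ?_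
  have hcardE : (#((univ.filter fun a : F => a ^ q = a).erase 0) : ℤ) = (q : ℤ) - 1 := by
    rw [Finset.card_erase_of_mem (by simp; omega), card_fixed q hq2 hadd hF hc]
    push_cast [show 1 ≤ q by omega]; rfl
  rw [← hcardE, ← nsmul_eq_mul]
  refine Finset.sum_le_card_nsmul _ _ _ fun a ha => ?_
  simp only [Finset.mem_erase, Finset.mem_filter, Finset.mem_univ, true_and] at ha
  apply le_of_sq_le_sq_aux (by positivity)
  refine (S_sq_le r q hq hF hc g e hg h hh a).trans ?_
  obtain ⟨k, hk⟩ : ∃ k, q - 1 = 3 * k + 1 := by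
    have : q % 3 = 2 := by
      rw [hq, hrs, pow_succ, pow_mul, Nat.mul_mod, Nat.pow_mod]; norm_num
    exact ⟨q / 3, by omega⟩
  have hker : #{b : F | LL q a b = 0} ≤ q * #({0, a ^ k} : Finset F) := by
    apply card_ker_le q hq2
    intro b hb
    rcases ker_fixed q hadd a ha.2 ha.1 b hb with h0 | h0
    · simp [h0]
    · have htq : (b ^ q + b) ^ q = b ^ q + b := by rw [hadd, hF, add_comm]
      generalize b ^ q + b = t at *
      have ht0 : t ≠ 0 := by rintro rfl; simp at h0
      have h1 := fixed_pow q hq2 ht0 htq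
      rw [hk, pow_succ, pow_mul] at h1
      have : t = a ^ k := by
        have h4 : a ^ k * (t ^ 3) ^ k = 1 := by rw [← mul_pow, h0, one_pow]
        calc t = a ^ k * (t ^ 3) ^ k * t := by rw [h4, one_mul]
          _ = a ^ k * ((t ^ 3) ^ k * t) := by ring
          _ = a ^ k := by rw [h1, mul_one]
      simp [this]
  have h5 : (#{b : F | LL q a b = 0} : ℤ) ≤ q * 2 := by
    exact_mod_cast hker.trans (Nat.mul_le_mul_left _ Finset.card_le_two)
  calc (q : ℤ) ^ 2 * #{b : F | LL q a b = 0} ≤ (q : ℤ) ^ 2 * (q * 2) := by gcongr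
    _ = (2 ^ (3 * s + 2)) ^ 2 := by rw [hq, hrs]; push_cast; ring

theorem card_roots_one (m : ℕ) (hm : 0 < m) : #{a : F | a ^ m = 1} ≤ m := by
  calc _ ≤ #(Polynomial.nthRoots m (1 : F)).toFinset := by
        apply Finset.card_le_card
        intro b hb
        simp only [Finset.mem_filter, Finset.mem_univ, true_and] at hb
        rw [Multiset.mem_toFinset, Polynomial.mem_nthRoots hm, hb]
    _ ≤ _ := Multiset.toFinset_card_le _
    _ ≤ m := Polynomial.card_nthRoots m 1

theorem card_cube_le (a : F) (ha : a ≠ 0) : #{t : F | a * t ^ 3 = 1} ≤ 3 := by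
  calc _ ≤ #(Polynomial.nthRoots 3 (a⁻¹ : F)).toFinset := by
        apply Finset.card_le_card
        intro b hb
        simp only [Finset.mem_filter, Finset.mem_univ, true_and] at hb
        rw [Multiset.mem_toFinset, Polynomial.mem_nthRoots (by norm_num)]
        exact eq_inv_of_mul_eq_one_right hb
    _ ≤ _ := Multiset.toFinset_card_le _
    _ ≤ 3 := Polynomial.card_nthRoots 3 _

theorem core_even (s r q : ℕ) (hs : 0 < s) (hrs : r = 2 * s) (hq : q = 2 ^ r)
    (hc : Fintype.card F = q ^ 2) (g : F → ZMod 2) (e : F → F → ZMod 2)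
    (hg : ∀ a b x, g x + g (x + a) + (g (x + b) + g (x + b + a)) = e a b)
    (h : F → ZMod 2) (hh : ∀ x, h x = Algebra.trace (ZMod 2) F (x ^ (q + 3)) + g x) :
    3 * (∑ x, sgn (h x)) ^ 2 ≤ 3 * ((q : ℤ) ^ 2
      + ((q : ℤ) ^ 2 - q) * (2 * q)) + ((q : ℤ) - 1) * 2 ^ (3 * s + 2) := by
  have hF : ∀ x : F, (x ^ q) ^ q = x := fun x => by
    rw [← pow_mul, ← sq, ← hc, FiniteField.pow_card]
  have hq2 : 2 ≤ q := by
    rw [hq]; exact Nat.le_self_pow (by omega) 2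
  have hadd := hadd_of (F := F) r q hq
  obtain ⟨k, hk⟩ : ∃ k, q = 3 * k + 1 := by
    have : q % 3 = 1 := by
      rw [hq, hrs, pow_mul, Nat.pow_mod]; norm_num
    exact ⟨q / 3, by omega⟩
  have main := core_general r q (by omega) hq hc g e hg h hh (2 ^ (3 * s) * (4 * k)) ?_
  · have h3 : (q : ℤ) - 1 = 3 * k := by rw [hk]; push_cast; ring
    rw [h3, pow_add]
    linarith
  have hcardE : (#((univ.filter fun a : F => a ^ q = a).erase 0) : ℤ) = 3 * k := by
    rw [Finset.card_erase_of_mem (by simp; omega), card_fixed q hq2 hadd hF hc, hk]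
    push_cast; simp
  have hbound : ∀ a ∈ (univ.filter fun a : F => a ^ q = a).erase 0,
      (∑ x, sgn (h x + h (x + a))) ≤ 2 ^ (3 * s) + if a ^ k = 1 then 2 ^ (3 * s) else 0 := by
    intro a ha
    simp only [Finset.mem_erase, Finset.mem_filter, Finset.mem_univ, true_and] at ha
    apply le_of_sq_le_sq_aux (by split_ifs <;> positivity)
    refine (S_sq_le r q hq hF hc g e hg h hh a).trans ?_
    split_ifs with hak
    · have hker : #{b : F | LL q a b = 0} ≤ q * #(insert 0 (univ.filter fun t : F => a * t ^ 3 = 1)) := by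
        apply card_ker_le q hq2
        intro b hb
        rcases ker_fixed q hadd a ha.2 ha.1 b hb with h0 | h0 <;> simp [h0]
      have h5 : (#{b : F | LL q a b = 0} : ℤ) ≤ q * 4 := by
        have := Finset.card_insert_le (0 : F) (univ.filter fun t : F => a * t ^ 3 = 1)
        have h6 := card_cube_le a ha.1
        exact_mod_cast hker.trans (Nat.mul_le_mul_left _ (by omega))
      calc (q : ℤ) ^ 2 * #{b : F | LL q a b = 0} ≤ (q : ℤ) ^ 2 * (q * 4) := by gcongr
        _ = (2 ^ (3 * s) + 2 ^ (3 * s)) ^ 2 := by rw [hq, hrs]; push_cast; ring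
    · have hker : #{b : F | LL q a b = 0} ≤ q * #({0} : Finset F) := by
        apply card_ker_le q hq2
        intro b hb
        rcases ker_fixed q hadd a ha.2 ha.1 b hb with h0 | h0
        · simp [h0]
        · exfalso
          apply hak
          have htq : (b ^ q + b) ^ q = b ^ q + b := by rw [hadd, hF, add_comm]
          generalize b ^ q + b = t at *
          have ht0 : t ≠ 0 := by rintro rfl; simp at h0
          have h1 := fixed_pow q hq2 ht0 htq
          rw [show q - 1 = 3 * k by omega, pow_mul] at h1
          calc a ^ k = a ^ k * (t ^ 3) ^ k := by rw [h1, mul_one]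
            _ = 1 := by rw [← mul_pow, h0, one_pow]
      have h5 : (#{b : F | LL q a b = 0} : ℤ) ≤ q := by
        simp only [Finset.card_singleton, mul_one] at hker
        exact_mod_cast hker
      calc (q : ℤ) ^ 2 * #{b : F | LL q a b = 0} ≤ (q : ℤ) ^ 2 * q := by gcongr
        _ = (2 ^ (3 * s) + 0) ^ 2 := by rw [hq, hrs]; push_cast; ring
  refine (Finset.sum_le_sum hbound).trans ?_
  rw [Finset.sum_add_distrib, Finset.sum_const, nsmul_eq_mul, hcardE, ← Finset.sum_filter,
    Finset.sum_const, nsmul_eq_mul]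
  have h7 : (#(((univ.filter fun a : F => a ^ q = a).erase 0).filter fun a => a ^ k = 1) : ℤ) ≤ k := by
    have : #(((univ.filter fun a : F => a ^ q = a).erase 0).filter fun a => a ^ k = 1) ≤ k :=
      (Finset.card_le_card (Finset.filter_subset_filter _ (Finset.subset_univ _))).trans
        (card_roots_one k (by omega))
    exact_mod_cast this
  have h8 : (0 : ℤ) ≤ 2 ^ (3 * s) := by positivity
  nlinarith

theorem dist_sum (h : F → ZMod 2) :
    2 * ({x : F | h x ≠ 0}.ncard : ℤ) = Fintype.card F - ∑ x, sgn (h x) := by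
  have h1 : ({x : F | h x ≠ 0}.ncard : ℤ) = ∑ x, if h x ≠ 0 then (1 : ℤ) else 0 := by
    rw [Finset.sum_boole, Set.ncard_eq_toFinset_card']
    simp
  rw [h1, Finset.mul_sum, ← Finset.card_univ, Finset.cast_card, ← Finset.sum_sub_distrib]
  refine Finset.sum_congr rfl fun x _ => ?_
  unfold sgn
  by_cases hx : h x = 0 <;> simp [hx]

end NLHelpers

theorem nl_bound (r n : ℕ) (hr : 0 < r) (hn : n = 2 * r)
    (f : Fq n → ZMod 2) (hf : ∀ x, f x = tr (x ^ (2 ^ r + 3))) (R : ℝ)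
    (hR : ∀ [Fintype (Fq n)] (g : Fq n → ZMod 2) (e : Fq n → Fq n → ZMod 2),
      (∀ a b x, g x + g (x + a) + (g (x + b) + g (x + b + a)) = e a b) →
      Fintype.card (Fq n) = (2 ^ r) ^ 2 →
      ((∑ x, sgn (f x + g x) : ℤ) : ℝ) ^ 2 ≤ R) :
    (nl 2 f : ℝ) ≥ (2:ℝ) ^ ((n:ℝ) - 1) - (1/2) * Real.sqrt R := by
  classical
  haveI : Fintype (Fq n) := Fintype.ofFinite _
  have hcard : Fintype.card (Fq n) = (2 ^ r) ^ 2 := by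
    rw [← Nat.card_eq_fintype_card, GaloisField.card 2 n (by omega), hn]; ring
  have hne : {d : ℕ | ∃ g : Fq n → ZMod 2, degLE g 2 ∧ d = hdist f g}.Nonempty := by
    refine ⟨_, fun _ => 0, ?_, rfl⟩
    intro l hl
    match l, hl with
    | [c, b, a], _ => funext x; simp [derIter, der]
  obtain ⟨g, hg, hd⟩ := Nat.sInf_mem hne
  change nl 2 f = hdist f g at hd
  rw [hd]
  have hge : ∀ a b x, g x + g (x + a) + (g (x + b) + g (x + b + a))
      = g 0 + g (0 + a) + (g (0 + b) + g (0 + b + a)) := by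
    intro a b x
    have := congrFun (hg [x, b, a] rfl) 0
    simp only [derIter, der] at this
    rw [CharTwo.add_eq_zero, zero_add x] at this
    exact this.symm
  have hW := hR g _ hge hcard
  have hds := dist_sum (fun x => f x + g x)
  have hset : {x : Fq n | f x + g x ≠ 0} = {x | f x ≠ g x} := by
    ext x; simp [CharTwo.add_eq_zero]
  rw [hset] at hds
  change 2 * ((hdist f g : ℕ) : ℤ) = _ at hds
  have hdsR : 2 * (hdist f g : ℝ) = ((2 : ℝ) ^ r) ^ 2 - ((∑ x, sgn (f x + g x) : ℤ) : ℝ) := by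
    rw [hcard] at hds
    exact_mod_cast hds
  have h1 : (2:ℝ) ^ ((n:ℝ) - 1) = ((2 : ℝ) ^ r) ^ 2 / 2 := by
    rw [Real.rpow_sub (by norm_num), Real.rpow_natCast, Real.rpow_one, hn, mul_comm 2 r, pow_mul]
  have h2 := Real.le_sqrt_of_sq_le hW
  rw [h1]
  linarith


/-- Second-order nonlinearity lower bound for `tr(x^(2^r+3))` with `n = 2r`. -/
theorem second_order_nl_tr_x_pow_2r_add_3 (r n : ℕ) (hr : 0 < r) (hn : n = 2 * r)
    (f : Fq n → ZMod 2) (hf : ∀ x, f x = tr (x ^ (2 ^ r + 3))) :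
    (Odd r →
      (nl 2 f : ℝ) ≥ (2:ℝ) ^ ((n:ℝ) - 1) - (1/2) * Real.sqrt
        ((2:ℝ) ^ (3 * (n:ℝ) / 2 + 1) + (2:ℝ) ^ (5 * (n:ℝ) / 4 + 1/2)
          - (2:ℝ) ^ (n:ℝ) - (2:ℝ) ^ (3 * (n:ℝ) / 4 + 1/2))) ∧
    (Even r →
      (nl 2 f : ℝ) ≥ (2:ℝ) ^ ((n:ℝ) - 1) - (1/2) * Real.sqrt
        ((2:ℝ) ^ (3 * (n:ℝ) / 2 + 1) + (1/3) * (2:ℝ) ^ (5 * (n:ℝ) / 4 + 2)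
          - (2:ℝ) ^ (n:ℝ) - (1/3) * (2:ℝ) ^ (3 * (n:ℝ) / 4 + 2))) := by
  constructor
  · rintro ⟨s, hs⟩
    refine nl_bound r n hr hn f hf _ ?_
    intro _ g e hg hc
    classical
    have h1 := core_odd s r (2 ^ r) hs rfl hc g e hg (fun x => f x + g x)
      (fun x => by rw [hf x]; rfl)
    have h2 : ((∑ x, sgn (f x + g x) : ℤ) : ℝ) ^ 2 ≤ ((2:ℝ) ^ r) ^ 2
      + ((2:ℝ) ^ r - 1) * 2 ^ (3 * s + 2)
      + (((2:ℝ) ^ r) ^ 2 - (2:ℝ) ^ r) * (2 * (2:ℝ) ^ r) := by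
      exact_mod_cast h1
    refine h2.trans (le_of_eq ?_)
    have hnr : (n : ℝ) = 4 * s + 2 := by rw [hn, hs]; push_cast; ring
    rw [show 3 * (n:ℝ) / 2 + 1 = ((6 * s + 4 : ℕ) : ℝ) by rw [hnr]; push_cast; ring,
      show 5 * (n:ℝ) / 4 + 1 / 2 = ((5 * s + 3 : ℕ) : ℝ) by rw [hnr]; push_cast; ring,
      show 3 * (n:ℝ) / 4 + 1 / 2 = ((3 * s + 2 : ℕ) : ℝ) by rw [hnr]; push_cast; ring]
    simp only [Real.rpow_natCast]
    rw [hn, hs]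
    ring
  · rintro ⟨s, hs⟩
    refine nl_bound r n hr hn f hf _ ?_
    intro _ g e hg hc
    classical
    have h1 := core_even s r (2 ^ r) (by omega) (by omega) rfl hc g e hg (fun x => f x + g x)
      (fun x => by rw [hf x]; rfl)
    have h2 : 3 * ((∑ x, sgn (f x + g x) : ℤ) : ℝ) ^ 2 ≤ 3 * (((2:ℝ) ^ r) ^ 2
      + (((2:ℝ) ^ r) ^ 2 - (2:ℝ) ^ r) * (2 * (2:ℝ) ^ r)) + ((2:ℝ) ^ r - 1) * 2 ^ (3 * s + 2) := by
      exact_mod_cast h1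
    have h3 : ((∑ x, sgn (f x + g x) : ℤ) : ℝ) ^ 2 ≤ (3 * (((2:ℝ) ^ r) ^ 2
      + (((2:ℝ) ^ r) ^ 2 - (2:ℝ) ^ r) * (2 * (2:ℝ) ^ r)) + ((2:ℝ) ^ r - 1) * 2 ^ (3 * s + 2)) / 3 := by
      linarith
    refine h3.trans (le_of_eq ?_)
    have hnr : (n : ℝ) = 4 * s := by rw [hn, hs]; push_cast; ring
    rw [show 3 * (n:ℝ) / 2 + 1 = ((6 * s + 1 : ℕ) : ℝ) by rw [hnr]; push_cast; ring,
      show 5 * (n:ℝ) / 4 + 2 = ((5 * s + 2 : ℕ) : ℝ) by rw [hnr]; push_cast; ring,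
      show 3 * (n:ℝ) / 4 + 2 = ((3 * s + 2 : ℕ) : ℝ) by rw [hnr]; push_cast; ring]
    simp only [Real.rpow_natCast]
    rw [hn, hs]
    ring
end
end
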